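/- Let d ∈ {2,3}, N ∈ ℕ, 0 < c < √2, and let ψ be a finite energy solution of the slab problem on Ω_N with speed c that is vortexless, i.e. ψ(x) ≠ 0 for all x ∈ Ω_N, and write ψ = ρ e^{iθ} with ρ = |ψ| > 0 and θ : Ω_N → ℝ smooth. Then the following three identities hold: (i) P(ψ) = (1/2) ∫_{Ω_N} (1 − ρ²) ∂_{x₁}θ; (ii) c P(ψ) = ∫_{Ω_N} ρ² |∇θ|²; (iii) ∫_{Ω_N} (2 ρ |∇ρ|² + ρ (1 − ρ²)²) = c ∫_{Ω_N} ρ (1 − ρ²) ∂_{x₁}θ + ∫_{Ω_N} ρ (1 − ρ²) |∇θ|². -/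

import Mathlib

/-! The proof works with the real form of the equation for `ψ = u + iv`,
`Δu = c ∂₁v - (1 - |ψ|²)u` and `Δv = -c ∂₁u - (1 - |ψ|²)v`, on the closed slab, where everything is
smooth up to the boundary. Each identity is the vanishing of the integral of a divergence:

* (i) `∂₁(θ - a - 2v + uv) = (1 - ρ²) ∂₁θ + 2 (u - 1) ∂₁v`, where `a` is the boundary value of `θ`;
* (ii) the divergence of `(θ - a)(u∇v - v∇u) + (c/2)(ρ² - 1)(θ - a) e₁`, which is
  `ρ²|∇θ|² - (c/2)(1 - ρ²) ∂₁θ`, combined with (i);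
* (iii) the divergence of `(1 - ρ²)∇ρ`, using `Δρ = ρ|∇θ|² + cρ ∂₁θ - ρ(1 - ρ²)`.

The normal components of these fields vanish on the boundary, and with cutoffs that depend on the
tangential variables only, integrability of the tangential components and of the divergence suffices
to integrate by parts (`ibp_int`). The analytic content is therefore that the integrals exist and that
`θ` takes the same value `a` on the two boundary components.

* Maximum principle (`Sol.w_le`): `|ψ|² ≤ 1 + c²/4`, by testing the equation of `|ψ|²` with a
  nondecreasing function of `|ψ|²` and completing the square in the drift term.
* Tangential regularity (`caccioppoli`, `Sol.second`, `Sol.third`): tangential derivatives of `ψ`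
  vanish on the boundary and solve the differentiated system, so Caccioppoli estimates give square
  integrability of all second and third derivatives with at most one `∂₁`. With Poincaré's inequality
  (`poincare`) for `ψ - 1`, this covers all mixed derivatives of order at most one in each variable.
* Behaviour at infinity (`decay`, `Sol.far`): iterating the one-dimensional Sobolev inequality over the
  coordinates bounds a function pointwise by those mixed derivatives on a box of unit tangential size.
  Hence `Re ψ > 1/2` far out, and as `ψ` has no zeros, `|ψ|` is bounded below (`Sol.lower`).
* Phase (`Lift.phase_bdry`): on the boundary `θ` is a multiple of `2π`, constant on each component, and
  the two constants agree because `Re ψ > 0` on a far half-slab joining the components. Finally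
  `∇θ` is square integrable by the lower bound on `ρ`, and `θ - a` by Poincaré (`Lift.good`).
-/

open MeasureTheory Filter Complex Metric Topology

noncomputable section

abbrev Ed (d : ℕ) := EuclideanSpace ℝ (Fin d)

/-- Partial derivative of `ψ` in the `i`-th coordinate direction. -/
def pd {d : ℕ} (ψ : Ed d → ℂ) (i : Fin d) (x : Ed d) : ℂ :=
  fderiv ℝ ψ x (EuclideanSpace.single i 1)

/-- Laplacian of `ψ`. -/
def lap {d : ℕ} (ψ : Ed d → ℂ) (x : Ed d) : ℂ :=
  ∑ i : Fin d, fderiv ℝ (fun y => fderiv ℝ ψ y (EuclideanSpace.single i 1)) x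
      (EuclideanSpace.single i 1)

/-- The Gross–Pitaevskii traveling wave equation with speed `c` on `ℝ^d`:
`ic ∂_{x₁}ψ + Δψ + (1 - |ψ|²)ψ = 0`. -/
def GPeq {d : ℕ} [NeZero d] (c : ℝ) (ψ : Ed d → ℂ) : Prop :=
  ∀ x, Complex.I * (c : ℂ) * pd ψ 0 x + lap ψ x + (1 - (‖ψ x‖ : ℂ) ^ 2) * ψ x = 0

/-- `|∇ψ|²`. -/
def gradSq {d : ℕ} (ψ : Ed d → ℂ) (x : Ed d) : ℝ := ∑ i : Fin d, ‖pd ψ i x‖ ^ 2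

/-- Energy density `(1/2)|∇ψ|² + (1/4)(1 - |ψ|²)²`. -/
def eDen {d : ℕ} (ψ : Ed d → ℂ) (x : Ed d) : ℝ :=
  1 / 2 * gradSq ψ x + 1 / 4 * (1 - ‖ψ x‖ ^ 2) ^ 2

/-- Energy `E(ψ)`. -/
def energy {d : ℕ} (ψ : Ed d → ℂ) : ℝ := ∫ x, eDen ψ x

/-- Finite energy. -/
def FiniteEnergy {d : ℕ} (ψ : Ed d → ℂ) : Prop := Integrable (eDen ψ)

/-- Momentum `P(ψ) = -∫ ∂_{x₁}(Im ψ)(Re ψ - 1)`. -/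
def mom {d : ℕ} [NeZero d] (ψ : Ed d → ℂ) : ℝ :=
  -∫ x, (pd ψ 0 x).im * ((ψ x).re - 1)

/-- Lagrangian `I^c(ψ) = E(ψ) - c P(ψ)`. -/
def lagr {d : ℕ} [NeZero d] (c : ℝ) (ψ : Ed d → ℂ) : ℝ := energy ψ - c * mom ψ

/-- `ψ` is not a constant of modulus 1. -/
def Nontriv {d : ℕ} (ψ : Ed d → ℂ) : Prop := ¬∃ z : ℂ, ‖z‖ = 1 ∧ ψ = fun _ => z

/-- The quadratic form `Q` of the second variation of `I^c` at `ψ`: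
`Q(φ) = ∫ |∇φ|² - c⟨φ, i∂₁φ⟩ - (1-|ψ|²)|φ|² + 2⟨φ,ψ⟩²` with `⟨z₁,z₂⟩ = Re (z₁ conj z₂)`. -/
def Qform {d : ℕ} [NeZero d] (c : ℝ) (ψ φ : Ed d → ℂ) : ℝ :=
  ∫ x, (gradSq φ x - c * (φ x * (starRingEnd ℂ) (Complex.I * pd φ 0 x)).re
    - (1 - ‖ψ x‖ ^ 2) * ‖φ x‖ ^ 2 + 2 * ((φ x * (starRingEnd ℂ) (ψ x)).re) ^ 2)

/-- The Morse index of `ψ` is at most `m`: every subspace of smooth compactly supported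
functions on which `Q` is negative definite has dimension at most `m`. -/
def MorseIndexLE {d : ℕ} [NeZero d] (c : ℝ) (ψ : Ed d → ℂ) (m : ℕ) : Prop :=
  ∀ Y : Submodule ℝ (Ed d → ℂ),
    (∀ φ ∈ Y, ContDiff ℝ (⊤ : ℕ∞) φ ∧ HasCompactSupport φ) →
    (∀ φ ∈ Y, φ ≠ 0 → Qform c ψ φ < 0) → Module.rank ℝ Y ≤ m

/-- `C^k_loc` convergence: uniform convergence of all iterated derivatives on every
compact set. -/
def LocCk {d : ℕ} (ψn : ℕ → Ed d → ℂ) (ψ : Ed d → ℂ) : Prop :=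
  ∀ (k : ℕ) (K : Set (Ed d)), IsCompact K →
    TendstoUniformlyOn (fun n => iteratedFDeriv ℝ k (ψn n)) (iteratedFDeriv ℝ k ψ) atTop K

/-- The open slab `Ω_N = {x : -N < x₁ < N}`. -/
def slab (d N : ℕ) [NeZero d] : Set (Ed d) := {x | -(N : ℝ) < x 0 ∧ x 0 < N}

/-- The closed slab. -/
def slabCl (d N : ℕ) [NeZero d] : Set (Ed d) := {x | -(N : ℝ) ≤ x 0 ∧ x 0 ≤ N}

/-- The boundary of the slab `Ω_N`. -/
def slabBdry (d N : ℕ) [NeZero d] : Set (Ed d) := {x | x 0 = -(N : ℝ) ∨ x 0 = (N : ℝ)}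

/-- A finite energy solution of the slab problem on `Ω_N` with speed `c`. -/
def SlabSolution (d N : ℕ) [NeZero d] (c : ℝ) (ψ : Ed d → ℂ) : Prop :=
  ContDiffOn ℝ (⊤ : ℕ∞) ψ (slabCl d N) ∧
  (∀ x ∈ slab d N,
    Complex.I * (c : ℂ) * pd ψ 0 x + lap ψ x + (1 - (‖ψ x‖ : ℂ) ^ 2) * ψ x = 0) ∧
  (∀ x ∈ slabBdry d N, ψ x = 1) ∧
  IntegrableOn (eDen ψ) (slab d N)

/-- `ψ` is not a constant of modulus 1 on `Ω_N`. -/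
def SlabNontriv (d N : ℕ) [NeZero d] (ψ : Ed d → ℂ) : Prop :=
  ¬∃ z : ℂ, ‖z‖ = 1 ∧ ∀ x ∈ slab d N, ψ x = z

/-- `|∇f|²` for a real-valued function. -/
def gradSqR {d : ℕ} (f : Ed d → ℝ) (x : Ed d) : ℝ :=
  ∑ i : Fin d, (fderiv ℝ f x (EuclideanSpace.single i 1)) ^ 2

/-- The set where `|ψ| < r`. -/
def Sset {d : ℕ} (ψ : Ed d → ℂ) (r : ℝ) : Set (Ed d) := {x | ‖ψ x‖ < r}

/-! ### Smooth functions on the closed slab and their partial derivatives -/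

/-- The `i`-th coordinate vector. -/
abbrev eV {d : ℕ} (i : Fin d) : Ed d := EuclideanSpace.single i 1

/-- Smoothness up to the boundary on the closed slab. -/
abbrev Sm {d : ℕ} (N : ℕ) [NeZero d] (f : Ed d → ℝ) : Prop :=
  ContDiffOn ℝ (⊤ : ℕ∞) f (slabCl d N)

/-- The `i`-th partial derivative relative to the closed slab; it is continuous up to the boundary
and agrees with the usual partial derivative in the open slab. -/
def D {d : ℕ} (N : ℕ) [NeZero d] (i : Fin d) (f : Ed d → ℝ) (x : Ed d) : ℝ :=
  fderivWithin ℝ f (slabCl d N) x (eV i)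

section calculus

variable {d N : ℕ} [NeZero d]

theorem cont_coord (i : Fin d) : Continuous fun x : Ed d => x i := by fun_prop

theorem isOpen_slab : IsOpen (slab d N) :=
  (isOpen_lt continuous_const (cont_coord 0)).inter (isOpen_lt (cont_coord 0) continuous_const)

theorem isClosed_slabCl : IsClosed (slabCl d N) :=
  (isClosed_le continuous_const (cont_coord 0)).inter
    (isClosed_le (cont_coord 0) continuous_const)

theorem slab_sub : slab d N ⊆ slabCl d N := fun _ hx => ⟨hx.1.le, hx.2.le⟩

theorem measurable_slab : MeasurableSet (slab d N) := isOpen_slab.measurableSet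

theorem slab_nhds {x : Ed d} (hx : x ∈ slab d N) : slabCl d N ∈ 𝓝 x :=
  Filter.mem_of_superset (isOpen_slab.mem_nhds hx) slab_sub

theorem convex_slabCl : Convex ℝ (slabCl d N) := by
  intro x hx y hy a b ha hb hab
  have h1 := hx.1
  have h2 := hx.2
  have h3 := hy.1
  have h4 := hy.2
  simp only [slabCl, Set.mem_ofPred_eq, PiLp.add_apply, PiLp.smul_apply, smul_eq_mul]
  have : b = 1 - a := by linarith
  subst this
  constructor <;> nlinarith

theorem uniqueDiff (hN : 0 < N) : UniqueDiffOn ℝ (slabCl d N) := by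
  apply uniqueDiffOn_convex convex_slabCl
  refine ⟨0, mem_interior_iff_mem_nhds.2 (slab_nhds ?_)⟩
  have : (0 : ℝ) < N := by exact_mod_cast hN
  simp [slab, this]

theorem Sm.diffAt {f : Ed d → ℝ} (hf : Sm N f) {x : Ed d} (hx : x ∈ slab d N) :
    DifferentiableAt ℝ f x :=
  (hf.contDiffAt (slab_nhds hx)).differentiableAt (by simp)

theorem Sm.D {f : Ed d → ℝ} (hN : 0 < N) (hf : Sm N f) (i : Fin d) : Sm N (D N i f) := by
  have h := hf.fderivWithin (m := (⊤ : ℕ∞)) (uniqueDiff hN) (by simp)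
  exact h.clm_apply contDiffOn_const

theorem D_eq_fderiv (f : Ed d → ℝ) {x : Ed d} (hx : x ∈ slab d N) (i : Fin d) :
    D N i f x = fderiv ℝ f x (eV i) := by
  rw [D, fderivWithin_of_mem_nhds (slab_nhds hx)]

theorem Sm.dh {f : Ed d → ℝ} (hf : Sm N f) {x : Ed d} (hx : x ∈ slab d N) (i : Fin d) :
    HasDerivAt (fun t : ℝ => f (x + t • eV i)) (_root_.D N i f x) 0 := by
  rw [D_eq_fderiv f hx]
  have h := (hf.diffAt hx).hasFDerivAt
  have h2 : HasDerivAt (fun t : ℝ => x + t • eV i) (eV i) 0 := by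
    simpa using ((hasDerivAt_id (0 : ℝ)).smul_const (eV i)).const_add x
  have h3 : HasFDerivAt f (fderiv ℝ f x) (x + (0 : ℝ) • eV i) := by simpa using h
  exact h3.comp_hasDerivAt 0 h2

theorem D_of {f : Ed d → ℝ} (hf : Sm N f) {x : Ed d} (hx : x ∈ slab d N) {i : Fin d} {a : ℝ}
    (h : HasDerivAt (fun t : ℝ => f (x + t • eV i)) a 0) : D N i f x = a :=
  (hf.dh hx i).unique h

theorem D_mul {f g : Ed d → ℝ} (hf : Sm N f) (hg : Sm N g) {x : Ed d} (hx : x ∈ slab d N)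
    (i : Fin d) :
    D N i (fun y => f y * g y) x = D N i f x * g x + f x * D N i g x := by
  apply D_of (hf.mul hg) hx
  simpa using (hf.dh hx i).fun_mul (hg.dh hx i)

theorem D_add {f g : Ed d → ℝ} (hf : Sm N f) (hg : Sm N g) {x : Ed d} (hx : x ∈ slab d N)
    (i : Fin d) :
    D N i (fun y => f y + g y) x = D N i f x + D N i g x := by
  apply D_of (hf.add hg) hx
  simpa using (hf.dh hx i).fun_add (hg.dh hx i)

theorem D_sub {f g : Ed d → ℝ} (hf : Sm N f) (hg : Sm N g) {x : Ed d} (hx : x ∈ slab d N)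
    (i : Fin d) :
    D N i (fun y => f y - g y) x = D N i f x - D N i g x := by
  apply D_of (hf.sub hg) hx
  simpa using (hf.dh hx i).fun_sub (hg.dh hx i)

theorem D_const (a : ℝ) (x : Ed d) (i : Fin d) : D N i (fun _ => a) x = 0 := by
  simp [D]

theorem D_comp {f : Ed d → ℝ} {G : ℝ → ℝ} (hf : Sm N f) (hG : ContDiff ℝ (⊤ : ℕ∞) G) {x : Ed d}
    (hx : x ∈ slab d N) (i : Fin d) :
    D N i (fun y => G (f y)) x = deriv G (f x) * D N i f x := by
  apply D_of (hG.comp_contDiffOn hf) hx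
  have h1 : HasDerivAt G (deriv G (f x)) (f (x + (0 : ℝ) • eV i)) := by
    simpa using (hG.differentiable (by simp)).differentiableAt.hasDerivAt
  exact h1.comp 0 (hf.dh hx i)

theorem D_congr {f g : Ed d → ℝ} (h : ∀ x ∈ slab d N, f x = g x) {x : Ed d}
    (hx : x ∈ slab d N) (i : Fin d) : D N i f x = D N i g x := by
  rw [D_eq_fderiv f hx, D_eq_fderiv g hx]
  have : f =ᶠ[𝓝 x] g := Filter.eventually_of_mem (isOpen_slab.mem_nhds hx) h
  rw [this.fderiv_eq]

theorem D_comm {f : Ed d → ℝ} (hf : Sm N f) {x : Ed d} (hx : x ∈ slab d N) (i j : Fin d) :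
    D N i (D N j f) x = D N j (D N i f) x := by
  have key : ∀ i j : Fin d, D N i (D N j f) x = fderiv ℝ (fderiv ℝ f) x (eV i) (eV j) := by
    intro i j
    rw [D_congr (g := fun y => fderiv ℝ f y (eV j)) (fun y hy => D_eq_fderiv f hy j) hx,
      D_eq_fderiv _ hx]
    have hd : DifferentiableAt ℝ (fderiv ℝ f) x :=
      ((hf.contDiffAt (slab_nhds hx)).fderiv_right (m := 1) (by
        exact WithTop.coe_le_coe.2 le_top)).differentiableAt (by simp)
    rw [fderiv_clm_apply hd (differentiableAt_const _)]
    simp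
  rw [key, key]
  exact ((hf.contDiffAt (slab_nhds hx)).isSymmSndFDerivAt (by
    simpa using WithTop.coe_le_coe.2 (le_top : (2 : ℕ∞) ≤ ⊤))) _ _

/-- Tangential derivatives of a function that is constant on the boundary vanish there. -/
theorem D_bdry (hN : 0 < N) {f : Ed d → ℝ} (hf : Sm N f) {a : ℝ}
    (h : ∀ x ∈ slabBdry d N, f x = a)
    {j : Fin d} (hj : j ≠ 0) {x : Ed d} (hx : x ∈ slabBdry d N) : D N j f x = 0 := by
  have hN' : (0 : ℝ) < N := by exact_mod_cast hN
  have hb : slabBdry d N ⊆ slabCl d N := by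
    rintro y (hy | hy) <;> constructor <;> rw [hy] <;> linarith
  have hmem : ∀ t : ℝ, x + t • eV j ∈ slabBdry d N := by
    intro t
    have : (x + t • eV j) 0 = x 0 := by simp [hj.symm]
    rcases hx with hx | hx
    · left; rw [this, hx]
    · right; rw [this, hx]
  have h1 : HasFDerivWithinAt f (fderivWithin ℝ f (slabCl d N) x) (slabCl d N)
      (x + (0 : ℝ) • eV j) := by
    simpa using ((hf.differentiableOn (by simp)) x (hb hx)).hasFDerivWithinAt
  have h2 : HasDerivAt (fun t : ℝ => x + t • eV j) (eV j) 0 := by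
    simpa using ((hasDerivAt_id (0 : ℝ)).smul_const (eV j)).const_add x
  have h3 := h1.comp_hasDerivAt (0 : ℝ) h2 (Eventually.of_forall fun t => hb (hmem t))
  have h4 : (f ∘ fun t : ℝ => x + t • eV j) = fun _ => a := by
    funext t; exact h _ (hmem t)
  rw [h4] at h3
  exact h3.unique (hasDerivAt_const _ _)

theorem bdry_sub : slabBdry d N ⊆ slabCl d N := by
  have hN' : (0 : ℝ) ≤ N := by positivity
  rintro y (hy | hy) <;> constructor <;> rw [hy] <;> linarith

theorem slabCl_eq : slabCl d N = slab d N ∪ slabBdry d N := by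
  ext x
  constructor
  · rintro ⟨h1, h2⟩
    rcases h1.lt_or_eq with h1 | h1
    · rcases h2.lt_or_eq with h2 | h2
      · exact Or.inl ⟨h1, h2⟩
      · exact Or.inr (Or.inr h2)
    · exact Or.inr (Or.inl h1.symm)
  · rintro (h | h)
    · exact slab_sub h
    · exact bdry_sub h

end calculus

/-! ### The divergence theorem on the slab -/

section ibp

variable {d N : ℕ} [NeZero d]

theorem D_eq_zero_far {f : Ed d → ℝ} {R : ℝ}
    (hR : ∀ x ∈ slabCl d N, ∀ j, j ≠ 0 → R ≤ |x j| → f x = 0) (i : Fin d)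
    {x : Ed d} (hx : x ∈ slab d N) {j : Fin d} (hj : j ≠ 0) (hxj : R < |x j|) :
    D N i f x = 0 := by
  rw [D_eq_fderiv f hx]
  have : f =ᶠ[𝓝 x] fun _ => 0 := by
    have h1 : IsOpen {y : Ed d | R < |y j|} :=
      isOpen_lt continuous_const (cont_coord j).abs
    filter_upwards [slab_nhds hx, h1.mem_nhds hxj] with y hy hy2
    exact hR y hy j hj (le_of_lt hy2)
  rw [this.fderiv_eq]
  simp

theorem isCompact_box (R : ℝ) :
    IsCompact {x : Ed d | x ∈ slabCl d N ∧ ∀ j, j ≠ 0 → |x j| ≤ R} := by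
  apply Metric.isCompact_of_isClosed_isBounded
  · refine isClosed_slabCl.inter ?_
    have : {x : Ed d | ∀ j, j ≠ 0 → |x j| ≤ R} = ⋂ j, ⋂ (_ : j ≠ 0), {x : Ed d | |x j| ≤ R} := by
      ext; simp
    change IsClosed {x : Ed d | ∀ j, j ≠ 0 → |x j| ≤ R}
    rw [this]
    exact isClosed_iInter fun j => isClosed_iInter fun _ =>
      isClosed_le (cont_coord j).abs continuous_const
  · rw [isBounded_iff_forall_norm_le]
    refine ⟨√(∑ _i : Fin d, (max (N : ℝ) R) ^ 2), fun x hx => ?_⟩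
    rw [EuclideanSpace.norm_eq]
    apply Real.sqrt_le_sqrt
    apply Finset.sum_le_sum
    intro i _
    rw [Real.norm_eq_abs]
    by_cases hi : i = 0
    · subst hi
      have : |x 0| ≤ N := abs_le.2 hx.1
      gcongr
      exact this.trans (le_max_left _ _)
    · have := hx.2 i hi
      gcongr
      exact this.trans (le_max_right _ _)

/-- A function continuous up to the boundary of the slab and vanishing far out in some tangential
direction lives on a compact box, hence is integrable. -/
theorem integrable_of_far {f : Ed d → ℝ} (hf : ContinuousOn f (slabCl d N)) {R : ℝ}
    (hR : ∀ x ∈ slab d N, ∀ j, j ≠ 0 → R < |x j| → f x = 0) :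
    IntegrableOn f (slab d N) := by
  have hK := isCompact_box (d := d) (N := N) R
  have h1 : IntegrableOn f {x : Ed d | x ∈ slabCl d N ∧ ∀ j, j ≠ 0 → |x j| ≤ R} :=
    (hf.mono fun x hx => hx.1).integrableOn_compact hK
  have h2 : IntegrableOn f (slab d N ∩ {x : Ed d | x ∈ slabCl d N ∧ ∀ j, j ≠ 0 → |x j| ≤ R}) :=
    h1.mono_set Set.inter_subset_right
  refine h2.of_forall_sdiff_eq_zero measurable_slab ?_
  rintro x ⟨hx, hx2⟩
  have : ∃ j, j ≠ 0 ∧ R < |x j| := by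
    by_contra! h
    exact hx2 ⟨hx, slab_sub hx, h⟩
  obtain ⟨j, hj, hj2⟩ := this
  exact hR x hx j hj hj2

/-- The divergence theorem on the slab for a field that vanishes for large tangential coordinates and
whose normal component vanishes on the boundary. -/
theorem integral_div_eq_zero (hN : 0 < N) (V : Fin d → Ed d → ℝ) (hV : ∀ i, Sm N (V i))
    (h0 : ∀ x ∈ slabBdry d N, V 0 x = 0) (R : ℝ)
    (hR : ∀ i, ∀ x ∈ slabCl d N, ∀ j, j ≠ 0 → R ≤ |x j| → V i x = 0) :
    ∫ x in slab d N, ∑ i, D N i (V i) x = 0 := by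
  obtain ⟨n, rfl⟩ : ∃ n, d = n + 1 := ⟨d - 1, (Nat.succ_pred (NeZero.ne d)).symm⟩
  have hN' : (0 : ℝ) < N := by exact_mod_cast hN
  set R' : ℝ := |R| + 1 with hR'
  have hRR : R < R' := by have := le_abs_self R; linarith
  have hR0 : 0 < R' := by positivity
  set b : Fin (n + 1) → ℝ := fun i => if i = 0 then (N : ℝ) else R' with hb
  set a : Fin (n + 1) → ℝ := fun i => -b i with ha
  have hbpos : ∀ i, 0 < b i := by
    intro i; simp only [hb]; split_ifs <;> assumption
  have hab : a ≤ b := fun i => by have := hbpos i; simp only [ha]; linarith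
  set T : (Fin (n + 1) → ℝ) → Ed (n + 1) := WithLp.toLp 2 with hT
  have hIcc : ∀ y ∈ Set.Icc a b, T y ∈ slabCl (n + 1) N := by
    intro y hy
    have h1 := hy.1 0
    have h2 := hy.2 0
    simp only [ha, hb, if_true] at h1 h2
    exact ⟨h1, h2⟩
  have hIoo : ∀ y ∈ Set.univ.pi fun i => Set.Ioo (a i) (b i), T y ∈ slab (n + 1) N := by
    intro y hy
    have h1 := hy 0 (Set.mem_univ _)
    simp only [ha, hb, if_true] at h1
    exact h1
  let L : (Fin (n + 1) → ℝ) →L[ℝ] Ed (n + 1) :=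
    (PiLp.continuousLinearEquiv 2 ℝ (fun _ : Fin (n + 1) => ℝ)).symm
  have hLT : ∀ y, L y = T y := fun y => rfl
  have hTc : Continuous T := L.continuous
  have hLs : ∀ i, L (Pi.single i 1) = eV i := fun i => rfl
  have key := integral_divergence_of_hasFDerivAt_off_countable' a b hab
    (fun i y => V i (T y)) (fun i y => (fderivWithin ℝ (V i) (slabCl (n + 1) N) (T y)).comp L)
    ∅ Set.countable_empty
    (fun i => (hV i).continuousOn.comp hTc.continuousOn hIcc)
    (by
      intro y hy i
      have h1 := ((hV i).diffAt (hIoo y hy.1)).hasFDerivAt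
      rw [← fderivWithin_of_mem_nhds (slab_nhds (hIoo y hy.1))] at h1
      exact HasFDerivAt.comp y (f := T) h1 L.hasFDerivAt)
    (by
      apply ContinuousOn.integrableOn_Icc
      apply continuousOn_finsetSum
      intro i _
      have := ((hV i).D hN i).continuousOn.comp hTc.continuousOn hIcc
      exact this)
  have hrhs : ∀ i : Fin (n + 1), ∀ s : ℝ, (s = a i ∨ s = b i) →
      (∫ (x : Fin n → ℝ) in Set.Icc (a ∘ i.succAbove) (b ∘ i.succAbove),
        V i (T (i.insertNth s x))) = 0 := by
    intro i s hs
    apply setIntegral_eq_zero_of_forall_eq_zero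
    intro x hx
    have hmem : i.insertNth (α := fun _ => ℝ) s x ∈ Set.Icc a b := by
      rw [Fin.insertNth_mem_Icc]
      refine ⟨?_, hx⟩
      rcases hs with rfl | rfl
      · exact ⟨le_rfl, hab i⟩
      · exact ⟨hab i, le_rfl⟩
    have hval : T (i.insertNth (α := fun _ => ℝ) s x) i = s := by simp [hT]
    by_cases hi : i = 0
    · subst hi
      apply h0
      rcases hs with rfl | rfl
      · left; rw [hval]; simp [ha, hb]
      · right; rw [hval]; simp [hb]
    · apply hR i _ (hIcc _ hmem) i hi
      rw [hval]
      have : |s| = R' := by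
        rcases hs with rfl | rfl <;> simp [ha, hb, hi, abs_of_pos hR0]
      linarith
  have hz : ∫ (x : Fin (n + 1) → ℝ) in Set.Icc a b, ∑ i, D N i (V i) (T x) = 0 := by
    refine key.trans ?_
    apply Finset.sum_eq_zero
    intro i _
    rw [hrhs i _ (Or.inl rfl), hrhs i _ (Or.inr rfl), sub_zero]
  have hae : (Set.univ.pi fun i => Set.Ioo (a i) (b i)) =ᵐ[volume] Set.Icc a b :=
    Measure.univ_pi_Ioo_ae_eq_Icc
  rw [← setIntegral_congr_set hae] at hz
  have hpre : T ⁻¹' {x | x ∈ slab (n + 1) N ∧ ∀ j, j ≠ 0 → |x j| < R'} =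
      Set.univ.pi fun i => Set.Ioo (a i) (b i) := by
    ext y
    simp only [Set.mem_preimage, Set.mem_ofPred_eq, Set.mem_pi, Set.mem_univ, true_imp_iff, slab,
      Set.mem_Ioo, hT]
    constructor
    · rintro ⟨h1, h2⟩ i
      by_cases hi : i = 0
      · subst hi; simpa [ha, hb] using h1
      · simpa [ha, hb, hi] using abs_lt.1 (h2 i hi)
    · intro h
      refine ⟨by simpa [ha, hb] using h 0, fun j hj => ?_⟩
      have := h j
      simp only [ha, hb, hj, if_false] at this
      exact abs_lt.2 this
  rw [← hpre, (PiLp.volume_preserving_toLp (Fin (n + 1))).setIntegral_preimage_emb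
    (MeasurableEquiv.toLp 2 (Fin (n + 1) → ℝ)).measurableEmbedding
    (fun x => ∑ i, D N i (V i) x)] at hz
  rw [← hz]
  apply setIntegral_eq_of_subset_of_forall_sdiff_eq_zero measurable_slab
  · exact fun x hx => hx.1
  · rintro x ⟨hx, hx2⟩
    have : ∃ j, j ≠ 0 ∧ R' ≤ |x j| := by
      by_contra! h
      exact hx2 ⟨hx, h⟩
    obtain ⟨j, hj, hj2⟩ := this
    apply Finset.sum_eq_zero
    intro i _
    exact D_eq_zero_far (hR i) i hx hj (hRR.trans_le hj2)

end ibp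

/-! ### Tangential cutoffs -/

/-- The tangential projection `(x₁, x̃) ↦ (0, x̃)`. -/
def tang {d : ℕ} [NeZero d] : Ed d →L[ℝ] Ed d :=
  ContinuousLinearMap.id ℝ (Ed d) -
    (EuclideanSpace.proj (0 : Fin d) : Ed d →L[ℝ] ℝ).smulRight (eV 0)

/-- A fixed smooth bump, equal to `1` on the unit ball and supported in the ball of radius `2`. -/
def bmp {d : ℕ} : ContDiffBump (0 : Ed d) := ⟨1, 2, one_pos, one_lt_two⟩

/-- The cutoff at tangential scale `n + 1`: it depends only on the tangential variables, so its
derivative in the direction transversal to the slab vanishes. -/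
def cut {d : ℕ} [NeZero d] (n : ℕ) (x : Ed d) : ℝ :=
  bmp (((n : ℝ) + 1)⁻¹ • tang x)

section cutoff

variable {d N : ℕ} [NeZero d]

theorem tang_apply (x : Ed d) (j : Fin d) : tang x j = if j = 0 then 0 else x j := by
  by_cases hj : j = 0
  · subst hj; simp [tang]
  · simp [tang, hj]

theorem tang_eV (i : Fin d) : tang (eV i) = if i = 0 then 0 else eV i := by
  ext j
  rw [tang_apply]
  by_cases hj : j = 0
  · by_cases hi : i = 0
    · simp [hj, hi]
    · have : (0 : Fin d) ≠ i := fun h => hi h.symm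
      simp [hj, hi, this]
  · by_cases hi : i = 0
    · simp [hj, hi]
    · simp [hj, hi]

theorem cut_contDiff (n : ℕ) : ContDiff ℝ (⊤ : ℕ∞) (cut (d := d) n) :=
  bmp.contDiff.comp (tang.contDiff.const_smul _)

theorem cut_sm (n : ℕ) : Sm N (cut (d := d) n) := (cut_contDiff n).contDiffOn

theorem cut_nonneg (n : ℕ) (x : Ed d) : 0 ≤ cut n x := bmp.nonneg

theorem cut_le_one (n : ℕ) (x : Ed d) : cut n x ≤ 1 := bmp.le_one

theorem cut_eq_one {n : ℕ} {x : Ed d} (h : ‖tang x‖ ≤ n + 1) : cut n x = 1 := by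
  apply bmp.one_of_mem_closedBall
  have hn : (0 : ℝ) < n + 1 := by positivity
  rw [mem_closedBall_zero_iff, norm_smul, norm_inv, Real.norm_of_nonneg hn.le]
  change _ ≤ (1 : ℝ)
  rw [inv_mul_le_one₀ hn]
  exact h

theorem cut_eq_zero {n : ℕ} {x : Ed d} {j : Fin d} (hj : j ≠ 0)
    (h : 2 * ((n : ℝ) + 1) ≤ |x j|) : cut n x = 0 := by
  apply bmp.zero_of_le_dist
  have hn : (0 : ℝ) < n + 1 := by positivity
  rw [dist_zero_right, norm_smul, norm_inv, Real.norm_of_nonneg hn.le]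
  change (2 : ℝ) ≤ _
  have h1 : |x j| ≤ ‖tang x‖ := by
    have := PiLp.norm_apply_le (tang x) j
    rwa [tang_apply, if_neg hj, Real.norm_eq_abs] at this
  rw [← div_eq_inv_mul, le_div_iff₀ hn]
  linarith

theorem cut_tendsto (x : Ed d) : Tendsto (fun n => cut n x) atTop (𝓝 1) := by
  apply tendsto_const_nhds.congr'
  obtain ⟨m, hm⟩ := exists_nat_ge ‖tang x‖
  filter_upwards [eventually_ge_atTop m] with n hn
  rw [cut_eq_one]
  have : (m : ℝ) ≤ n := by exact_mod_cast hn
  linarith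

theorem cut_D (n : ℕ) (i : Fin d) {x : Ed d} (hx : x ∈ slab d N) :
    D N i (cut n) x =
      ((n : ℝ) + 1)⁻¹ * fderiv ℝ (bmp : Ed d → ℝ) (((n : ℝ) + 1)⁻¹ • tang x) (tang (eV i)) := by
  rw [D_eq_fderiv _ hx]
  have h1 : HasFDerivAt (fun y : Ed d => ((n : ℝ) + 1)⁻¹ • tang y)
      (((n : ℝ) + 1)⁻¹ • (tang : Ed d →L[ℝ] Ed d)) x := tang.hasFDerivAt.fun_const_smul _
  have h2 : HasFDerivAt (bmp : Ed d → ℝ) (fderiv ℝ (bmp : Ed d → ℝ) (((n : ℝ) + 1)⁻¹ • tang x))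
      (((n : ℝ) + 1)⁻¹ • tang x) :=
    ((bmp.contDiff (n := 1)).differentiable (by simp)).differentiableAt.hasFDerivAt
  have h3 := (h2.comp x h1).fderiv
  change fderiv ℝ (cut n) x = _ at h3
  rw [h3]
  simp

theorem cut_D_zero (n : ℕ) {x : Ed d} (hx : x ∈ slab d N) : D N 0 (cut n) x = 0 := by
  rw [cut_D n 0 hx, tang_eV, if_pos rfl, map_zero, mul_zero]

theorem cut_D_bound (d N : ℕ) [NeZero d] : ∃ C : ℝ, 0 ≤ C ∧ ∀ (n : ℕ) (i : Fin d),
    ∀ x ∈ slab d N, |D N i (cut n) x| ≤ C * ((n : ℝ) + 1)⁻¹ := by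
  have hc : Continuous (fderiv ℝ (bmp : Ed d → ℝ)) :=
    (bmp.contDiff (n := 1)).continuous_fderiv (by simp)
  have hs : HasCompactSupport (fderiv ℝ (bmp : Ed d → ℝ)) := bmp.hasCompactSupport.fderiv ℝ
  obtain ⟨C, hC⟩ := hs.exists_bound_of_continuous hc
  refine ⟨C, (norm_nonneg _).trans (hC 0), fun n i x hx => ?_⟩
  rw [cut_D n i hx, abs_mul, abs_of_nonneg (by positivity), mul_comm]
  gcongr
  rw [← Real.norm_eq_abs]
  refine (ContinuousLinearMap.le_opNorm _ _).trans ?_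
  have : ‖tang (eV i)‖ ≤ 1 := by
    rw [tang_eV]; split_ifs <;> simp
  calc _ ≤ C * 1 := mul_le_mul (hC _) this (norm_nonneg _) ((norm_nonneg _).trans (hC 0))
    _ = C := mul_one C

theorem cut_lim {g : Ed d → ℝ} (hg : IntegrableOn g (slab d N)) :
    Tendsto (fun n => ∫ x in slab d N, cut n x * g x) atTop (𝓝 (∫ x in slab d N, g x)) := by
  apply tendsto_integral_of_dominated_convergence (fun x => ‖g x‖)
  · intro n
    exact (cut_contDiff n).continuous.aestronglyMeasurable.mul hg.aestronglyMeasurable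
  · exact hg.norm
  · intro n
    refine Eventually.of_forall fun x => ?_
    rw [norm_mul, Real.norm_of_nonneg (cut_nonneg n x)]
    exact mul_le_of_le_one_left (norm_nonneg _) (cut_le_one n x)
  · refine Eventually.of_forall fun x => ?_
    simpa using (cut_tendsto x).mul_const (g x)

/-- The gradient of the cutoff is `O(1/n)`, so it does not contribute against integrable functions. -/
theorem cut_d_lim {g : Ed d → ℝ} (hg : IntegrableOn g (slab d N)) (i : Fin d) :
    Tendsto (fun n => ∫ x in slab d N, D N i (cut n) x * g x) atTop (𝓝 0) := by
  obtain ⟨C, hC0, hC⟩ := cut_D_bound d N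
  have h1 : Tendsto (fun n : ℕ => C * ((n : ℝ) + 1)⁻¹ * ∫ x in slab d N, ‖g x‖) atTop (𝓝 0) := by
    have h2 : Tendsto (fun n : ℕ => ((n : ℝ) + 1)⁻¹) atTop (𝓝 0) := by
      simpa [one_div] using tendsto_one_div_add_atTop_nhds_zero_nat (𝕜 := ℝ)
    simpa using (h2.const_mul C).mul_const (∫ x in slab d N, ‖g x‖)
  apply squeeze_zero_norm _ h1
  intro n
  rw [← integral_const_mul]
  apply norm_integral_le_of_norm_le (hg.norm.const_mul _)
  refine (ae_restrict_iff' measurable_slab).2 (Eventually.of_forall fun x hx => ?_)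
  rw [norm_mul]
  gcongr
  exact hC n i x hx

theorem cut_mul_integrable {g : Ed d → ℝ} (hg : ContinuousOn g (slabCl d N)) (n : ℕ) :
    IntegrableOn (fun x => cut n x * g x) (slab d N) := by
  apply integrable_of_far (R := 2 * ((n : ℝ) + 1))
    ((cut_contDiff n).continuous.continuousOn.mul hg)
  intro x _ j hj h
  simp only [Pi.mul_apply]
  rw [cut_eq_zero hj h.le, zero_mul]

theorem cut_D_far (n : ℕ) (i : Fin d) {x : Ed d} (hx : x ∈ slab d N) {j : Fin d} (hj : j ≠ 0)
    (h : 2 * ((n : ℝ) + 1) < |x j|) : D N i (cut n) x = 0 :=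
  D_eq_zero_far (R := 2 * ((n : ℝ) + 1)) (fun _ _ _ hj h => cut_eq_zero hj h) i hx hj h

/-- A continuous non-negative function whose cut-off integrals are bounded is integrable. -/
theorem cut_fatou {g : Ed d → ℝ} (hg : ContinuousOn g (slabCl d N))
    (h0 : ∀ x ∈ slab d N, 0 ≤ g x) {K : ℝ}
    (hK : ∀ n, ∫ x in slab d N, cut n x ^ 2 * g x ≤ K) : IntegrableOn g (slab d N) := by
  set φ : ℕ → Set (Ed d) := fun n => {x | ‖tang x‖ ≤ n + 1} with hφ
  have hφm : ∀ n, MeasurableSet (φ n) := fun n =>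
    (isClosed_le tang.continuous.norm continuous_const).measurableSet
  have hcov : AECover (volume.restrict (slab d N)) atTop φ := by
    refine ⟨Eventually.of_forall fun x => ?_, hφm⟩
    obtain ⟨m, hm⟩ := exists_nat_ge ‖tang x‖
    filter_upwards [eventually_ge_atTop m] with n hn
    have : (m : ℝ) ≤ n := by exact_mod_cast hn
    change ‖tang x‖ ≤ (n : ℝ) + 1
    linarith
  have hint : ∀ n, IntegrableOn (fun x => cut n x ^ 2 * g x) (slab d N) := by
    intro n
    have := cut_mul_integrable (N := N) ((cut_contDiff n).continuous.continuousOn.mul hg) n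
    refine this.congr (Eventually.of_forall fun x => ?_)
    simp only [Pi.mul_apply]
    ring
  have hone : ∀ n, ∀ x ∈ φ n, cut n x ^ 2 * g x = g x := by
    intro n x hx
    rw [cut_eq_one hx]; ring
  have hintφ : ∀ n, IntegrableOn g (φ n) (volume.restrict (slab d N)) := by
    intro n
    have : IntegrableOn (fun x => cut n x ^ 2 * g x) (φ n) (volume.restrict (slab d N)) :=
      Integrable.integrableOn (hint n)
    exact this.congr_fun (hone n) (hφm n)
  refine hcov.integrable_of_integral_bounded_of_nonneg_ae K hintφ ?_ ?_
  · exact (ae_restrict_iff' measurable_slab).2 (Eventually.of_forall h0)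
  · refine Eventually.of_forall fun n => ?_
    refine le_trans ?_ (hK n)
    rw [← setIntegral_congr_fun (hφm n) (hone n)]
    apply setIntegral_le_integral (hint n)
    refine (ae_restrict_iff' measurable_slab).2 (Eventually.of_forall fun x hx => ?_)
    have := h0 x hx
    have h2 := sq_nonneg (cut n x)
    exact mul_nonneg h2 this

theorem integral_mono_slab {f g : Ed d → ℝ} (hf : IntegrableOn f (slab d N))
    (hg : IntegrableOn g (slab d N)) (h : ∀ x ∈ slab d N, f x ≤ g x) :
    ∫ x in slab d N, f x ≤ ∫ x in slab d N, g x :=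
  setIntegral_mono_on hf hg measurable_slab h

theorem sm_continuousOn_sum_D (hN : 0 < N) {F : Fin d → Ed d → ℝ} (hF : ∀ i, Sm N (F i)) :
    ContinuousOn (fun x => ∑ i, D N i (F i) x) (slabCl d N) :=
  continuousOn_finsetSum _ fun i _ => ((hF i).D hN i).continuousOn

/-- The divergence theorem with a tangentially compactly supported weight `χ`. -/
theorem ibp_weight (hN : 0 < N) {F : Fin d → Ed d → ℝ} (hF : ∀ i, Sm N (F i))
    (h0 : ∀ x ∈ slabBdry d N, F 0 x = 0) {χ : Ed d → ℝ} (hχ : Sm N χ) {R : ℝ}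
    (hR : ∀ x ∈ slabCl d N, ∀ j, j ≠ 0 → R ≤ |x j| → χ x = 0) :
    ∫ x in slab d N, (χ x * (∑ i, D N i (F i) x) + ∑ i, D N i χ x * F i x) = 0 := by
  rw [← integral_div_eq_zero hN (fun i x => χ x * F i x) (fun i => hχ.mul (hF i))
    (fun x hx => by rw [h0 x hx, mul_zero]) R
    (fun i x hx j hj h => by rw [hR x hx j hj h, zero_mul])]
  apply setIntegral_congr_fun measurable_slab
  intro x hx
  simp only
  rw [Finset.mul_sum, ← Finset.sum_add_distrib]
  refine Finset.sum_congr rfl fun i _ => ?_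
  rw [D_mul hχ (hF i) hx]
  ring

/-- Only derivatives of the cutoff are left on the right-hand side: there is no boundary term. -/
theorem ibp_cut (hN : 0 < N) {F : Fin d → Ed d → ℝ} (hF : ∀ i, Sm N (F i))
    (h0 : ∀ x ∈ slabBdry d N, F 0 x = 0) (n : ℕ) :
    ∫ x in slab d N, cut n x * (∑ i, D N i (F i) x) =
      - ∑ i, ∫ x in slab d N, D N i (cut n) x * F i x := by
  have h := ibp_weight hN hF h0 (cut_sm n) (R := 2 * ((n : ℝ) + 1))
    (fun x _ j hj h => cut_eq_zero hj h)
  have hi : ∀ i, IntegrableOn (fun x => D N i (cut n) x * F i x) (slab d N) := by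
    intro i
    apply integrable_of_far (R := 2 * ((n : ℝ) + 1))
      (((cut_sm n).D hN i).continuousOn.mul (hF i).continuousOn)
    intro x hx j hj h
    simp only [Pi.mul_apply]
    rw [cut_D_far n i hx hj h, zero_mul]
  rw [integral_add (cut_mul_integrable (sm_continuousOn_sum_D hN hF) n)
    (integrable_finsetSum _ fun i _ => hi i), integral_finsetSum _ fun i _ => hi i] at h
  linarith

/-- The cut-off integrals of a divergence tend to zero. The normal component need not be integrable,
because the cutoffs do not depend on `x₁`. -/
theorem ibp_lim (hN : 0 < N) {F : Fin d → Ed d → ℝ} (hF : ∀ i, Sm N (F i))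
    (h0 : ∀ x ∈ slabBdry d N, F 0 x = 0)
    (hint : ∀ i, i ≠ 0 → IntegrableOn (F i) (slab d N)) :
    Tendsto (fun n => ∫ x in slab d N, cut n x * (∑ i, D N i (F i) x)) atTop (𝓝 0) := by
  simp_rw [ibp_cut hN hF h0]
  have : Tendsto (fun n => ∑ i, ∫ x in slab d N, D N i (cut n) x * F i x) atTop
      (𝓝 (∑ _i : Fin d, (0 : ℝ))) := by
    apply tendsto_finsetSum
    intro i _
    by_cases hi : i = 0
    · subst hi
      have : ∀ n, ∫ x in slab d N, D N 0 (cut n) x * F 0 x = 0 := by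
        intro n
        apply setIntegral_eq_zero_of_forall_eq_zero
        intro x hx
        rw [cut_D_zero n hx, zero_mul]
      simp [this]
    · exact cut_d_lim (hint i hi) i
  simpa using this.neg

/-- The divergence theorem on the slab for a field that vanishes on the boundary and has integrable
tangential components and integrable divergence. -/
theorem ibp_int (hN : 0 < N) {F : Fin d → Ed d → ℝ} (hF : ∀ i, Sm N (F i))
    (h0 : ∀ x ∈ slabBdry d N, F 0 x = 0)
    (hint : ∀ i, i ≠ 0 → IntegrableOn (F i) (slab d N))
    (hq : IntegrableOn (fun x => ∑ i, D N i (F i) x) (slab d N)) :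
    ∫ x in slab d N, ∑ i, D N i (F i) x = 0 :=
  tendsto_nhds_unique (cut_lim hq) (ibp_lim hN hF h0 hint)

end cutoff

/-! ### A pointwise bound by mixed derivatives -/

/-- One-dimensional Sobolev inequality on an interval of length at least `2`. -/
theorem sobolev_1d {a b : ℝ} (hab : 2 ≤ b - a) {g g' : ℝ → ℝ}
    (hg : ∀ t ∈ Set.Ioo a b, HasDerivAt g (g' t) t) (hg' : ContinuousOn g' (Set.Ioo a b))
    {p : ℝ} (hp : p ∈ Set.Ioo a b) :
    ENNReal.ofReal (g p ^ 2) ≤ 2 * ∫⁻ t in Set.Ioo a b, ENNReal.ofReal (g t ^ 2 + g' t ^ 2) := by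
  by_cases htop : ∫⁻ t in Set.Ioo a b, ENNReal.ofReal (g t ^ 2 + g' t ^ 2) = ⊤
  · rw [htop]; simp
  have hgc : ContinuousOn g (Set.Ioo a b) := fun t ht => (hg t ht).continuousAt.continuousWithinAt
  have hKc : ContinuousOn (fun t => g t ^ 2 + g' t ^ 2) (Set.Ioo a b) := (hgc.pow 2).add (hg'.pow 2)
  have hK0 : ∀ t, 0 ≤ g t ^ 2 + g' t ^ 2 := fun t => by positivity
  have hKi : IntegrableOn (fun t => g t ^ 2 + g' t ^ 2) (Set.Ioo a b) := by
    refine ⟨hKc.aestronglyMeasurable measurableSet_Ioo, ?_⟩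
    rw [hasFiniteIntegral_iff_ofReal (Eventually.of_forall hK0)]
    exact lt_top_iff_ne_top.2 htop
  have hJ : ∫⁻ t in Set.Ioo a b, ENNReal.ofReal (g t ^ 2 + g' t ^ 2) =
      ENNReal.ofReal (∫ t in Set.Ioo a b, (g t ^ 2 + g' t ^ 2)) :=
    (ofReal_integral_eq_lintegral_ofReal hKi (Eventually.of_forall hK0)).symm
  set J := ∫ t in Set.Ioo a b, (g t ^ 2 + g' t ^ 2) with hJdef
  have hJ0 : 0 ≤ J := integral_nonneg hK0
  have hgi : IntegrableOn (fun t => g t ^ 2) (Set.Ioo a b) := by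
    refine hKi.mono' ((hgc.pow 2).aestronglyMeasurable measurableSet_Ioo) ?_
    refine Eventually.of_forall fun t => ?_
    rw [Real.norm_of_nonneg (sq_nonneg _)]
    nlinarith [sq_nonneg (g' t)]
  have hgJ : ∫ t in Set.Ioo a b, g t ^ 2 ≤ J :=
    integral_mono hgi hKi fun t => by
      change g t ^ 2 ≤ g t ^ 2 + g' t ^ 2
      nlinarith [sq_nonneg (g' t)]
  have hq : ∀ q ∈ Set.Ioo a b, g p ^ 2 ≤ g q ^ 2 + J := by
    intro q hq
    have hsub : Set.uIcc q p ⊆ Set.Ioo a b := (Set.ordConnected_Ioo).uIcc_subset hq hp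
    have h1 : ∫ t in q..p, 2 * g t * g' t = g p ^ 2 - g q ^ 2 := by
      apply intervalIntegral.integral_eq_sub_of_hasDerivAt (f := fun t => g t ^ 2)
      · intro t ht
        have := (hg t (hsub ht)).fun_pow 2
        have e : ((2 : ℕ) : ℝ) * g t ^ (2 - 1) * g' t = 2 * g t * g' t := by norm_num
        exact e ▸ this
      · apply ContinuousOn.intervalIntegrable
        exact ((continuousOn_const.mul (hgc.mono hsub)).mul (hg'.mono hsub))
    have h2 : |∫ t in q..p, 2 * g t * g' t| ≤ ∫ t in Set.uIoc q p, (g t ^ 2 + g' t ^ 2) := by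
      have h3 := intervalIntegral.norm_integral_le_integral_norm_uIoc (a := q) (b := p)
        (f := fun t => 2 * g t * g' t) (μ := volume)
      rw [Real.norm_eq_abs] at h3
      refine h3.trans ?_
      have hsub2 : Set.uIoc q p ⊆ Set.Ioo a b := Set.uIoc_subset_uIcc.trans hsub
      refine integral_mono_of_nonneg (Eventually.of_forall fun t => norm_nonneg _)
        (hKi.mono_set hsub2) (Eventually.of_forall fun t => ?_)
      change ‖2 * g t * g' t‖ ≤ g t ^ 2 + g' t ^ 2
      rw [Real.norm_eq_abs, abs_le]
      constructor <;> nlinarith [sq_nonneg (g t + g' t), sq_nonneg (g t - g' t)]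
    have h4 : ∫ t in Set.uIoc q p, (g t ^ 2 + g' t ^ 2) ≤ J := by
      apply setIntegral_mono_set hKi (Eventually.of_forall hK0)
      exact (Set.uIoc_subset_uIcc.trans hsub).eventuallyLE
    have := (abs_le.1 (h2.trans h4)).2
    linarith
  -- Averaging over `q` in the interval.
  have hfin : (b - a) * g p ^ 2 ≤ J + (b - a) * J := by
    have h1 : ∫ _t in Set.Ioo a b, g p ^ 2 ≤ ∫ t in Set.Ioo a b, (g t ^ 2 + J) := by
      apply setIntegral_mono_on _ _ measurableSet_Ioo hq
      · exact integrableOn_const (by simp)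
      · exact hgi.add (integrableOn_const (by simp))
    rw [integral_add hgi (integrableOn_const (by simp))] at h1
    have h5 : 0 ≤ b - a := by linarith
    simp [h5] at h1
    linarith
  have hle : g p ^ 2 ≤ 2 * J := by
    by_contra! h
    nlinarith
  rw [hJ]
  calc ENNReal.ofReal (g p ^ 2) ≤ ENNReal.ofReal (2 * J) := ENNReal.ofReal_le_ofReal hle
    _ = 2 * ENNReal.ofReal J := by rw [ENNReal.ofReal_mul (by norm_num)]; simp

/-- Sum of the squares of the mixed derivatives of `f` in the directions of a list, each direction
being used at most once. -/
def mixSq {d : ℕ} (N : ℕ) [NeZero d] : List (Fin d) → (Ed d → ℝ) → Ed d → ℝ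
  | [], f => fun x => f x ^ 2
  | j :: l, f => fun x => mixSq N l f x + mixSq N l (D N j f) x

section sobolev

variable {d N : ℕ} [NeZero d]

theorem mixSq_nonneg (l : List (Fin d)) (f : Ed d → ℝ) (x : Ed d) : 0 ≤ mixSq N l f x := by
  induction l generalizing f with
  | nil => exact sq_nonneg _
  | cons j l ih => exact add_nonneg (ih f) (ih _)

theorem mixSq_continuousOn (hN : 0 < N) (l : List (Fin d)) {f : Ed d → ℝ} (hf : Sm N f) :
    ContinuousOn (mixSq N l f) (slabCl d N) := by
  induction l generalizing f with
  | nil => exact hf.continuousOn.pow 2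
  | cons j l ih => exact (ih hf).add (ih (hf.D hN j))

/-- The box around `a` of tangential half-width `1` spanning the whole slab. -/
def bx {d : ℕ} (N : ℕ) [NeZero d] (a : Ed d) : Set (Ed d) :=
  {x | x ∈ slab d N ∧ ∀ j, j ≠ 0 → |x j - a j| < 1}

theorem bx_open (a : Ed d) : IsOpen (bx N a) := by
  have : {x : Ed d | ∀ j, j ≠ 0 → |x j - a j| < 1} =
      ⋂ j, ⋂ (_ : j ≠ 0), {x : Ed d | |x j - a j| < 1} := by
    ext; simp
  refine isOpen_slab.inter ?_
  change IsOpen {x : Ed d | ∀ j, j ≠ 0 → |x j - a j| < 1}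
  rw [this]
  exact isOpen_iInter_of_finite fun j => isOpen_iInter_of_finite fun _ =>
    isOpen_lt ((cont_coord j).sub continuous_const).abs continuous_const

/-- The non-negative function `F`, cut off to the box around `a`, on the product space. -/
def onBx {d : ℕ} (N : ℕ) [NeZero d] (a : Ed d) (F : Ed d → ℝ) (y : Fin d → ℝ) : ENNReal :=
  (bx N a).indicator (fun x => ENNReal.ofReal (F x)) (WithLp.toLp 2 y)

theorem onBx_measurable (a : Ed d) {F : Ed d → ℝ} (hF : ContinuousOn F (slabCl d N)) :
    Measurable (onBx N a F) := by
  have h1 : Measurable ((bx N a).indicator F) := by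
    classical
    rw [← Set.piecewise_eq_indicator]
    exact ContinuousOn.measurable_piecewise (hF.mono fun x hx => slab_sub hx.1)
      continuousOn_const (bx_open a).measurableSet
  have h2 : (bx N a).indicator (fun x => ENNReal.ofReal (F x)) =
      fun x => ENNReal.ofReal ((bx N a).indicator F x) := by
    ext x
    by_cases hx : x ∈ bx N a <;> simp [hx]
  unfold onBx
  rw [h2]
  exact (ENNReal.measurable_ofReal.comp h1).comp (WithLp.measurable_toLp 2 _)

theorem onBx_add (a : Ed d) {F G : Ed d → ℝ} (hF : ∀ x, 0 ≤ F x) (hG : ∀ x, 0 ≤ G x) :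
    onBx N a (fun x => F x + G x) = fun y => onBx N a F y + onBx N a G y := by
  ext y
  by_cases hx : WithLp.toLp 2 y ∈ bx N a
  · simp [onBx, hx, ENNReal.ofReal_add (hF _) (hG _)]
  · simp [onBx, hx]

/-- The one-dimensional Sobolev inequality along the `j`-th coordinate direction inside the box. -/
theorem onBx_step (hN : 0 < N) (a : Ed d) {f : Ed d → ℝ} (hf : Sm N f) (j : Fin d)
    (y : Fin d → ℝ) :
    onBx N a (fun x => f x ^ 2) y ≤
      2 * (∫⋯∫⁻_{j}, onBx N a (fun x => f x ^ 2 + D N j f x ^ 2) ∂fun _ => volume) y := by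
  by_cases hy : WithLp.toLp 2 y ∈ bx N a
  swap
  · simp [onBx, hy]
  have hN1 : (1 : ℝ) ≤ N := by exact_mod_cast hN
  rw [lmarginal_singleton]
  set lo : ℝ := if j = 0 then -(N : ℝ) else a j - 1 with hlo
  set hi : ℝ := if j = 0 then (N : ℝ) else a j + 1 with hhi
  have hupd : ∀ t, (WithLp.toLp 2 (Function.update y j t) : Ed d) ∈ bx N a ↔ t ∈ Set.Ioo lo hi := by
    intro t
    obtain ⟨⟨h1, h2⟩, h3⟩ := hy
    simp only [bx, slab, Set.mem_ofPred_eq, Set.mem_Ioo, hlo, hhi]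
    by_cases hj : j = 0
    · subst hj
      simp only [Function.update_self, if_true]
      refine ⟨fun h => h.1, fun h => ⟨h, fun k hk => ?_⟩⟩
      rw [Function.update_of_ne hk]
      exact h3 k hk
    · simp only [hj, if_false, Function.update_of_ne (Ne.symm hj)]
      constructor
      · intro h
        have := h.2 j hj
        rw [Function.update_self, abs_lt] at this
        constructor <;> linarith
      · intro h
        refine ⟨⟨h1, h2⟩, fun k hk => ?_⟩
        by_cases hkj : k = j
        · subst hkj
          rw [Function.update_self, abs_lt]
          constructor <;> linarith
        · rw [Function.update_of_ne hkj]
          exact h3 k hk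
  have hline : ∀ t s : ℝ, (WithLp.toLp 2 (Function.update y j (t + s)) : Ed d) =
      WithLp.toLp 2 (Function.update y j t) + s • eV j := by
    intro t s
    ext k
    by_cases hk : k = j
    · subst hk; simp
    · simp [hk]
  have hlen : 2 ≤ hi - lo := by
    simp only [hlo, hhi]; split_ifs <;> linarith
  have key := sobolev_1d hlen (g := fun t => f (WithLp.toLp 2 (Function.update y j t)))
    (g' := fun t => D N j f (WithLp.toLp 2 (Function.update y j t)))
    (by
      intro t ht
      have h1 := hf.dh ((hupd t).2 ht).1 j
      simp_rw [← hline] at h1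
      have h2 : HasDerivAt (fun s => f (WithLp.toLp 2 (Function.update y j (t + s))))
          (D N j f (WithLp.toLp 2 (Function.update y j t))) (t - t) := by simpa using h1
      have h3 := h2.comp_sub_const t t
      simpa using h3)
    (by
      refine (hf.D hN j).continuousOn.comp ?_ fun t ht => slab_sub ((hupd t).2 ht).1
      apply Continuous.continuousOn
      exact (PiLp.continuous_toLp 2 _).comp (continuous_const.update j continuous_id))
    (p := y j) (by rw [← hupd, Function.update_eq_self]; exact hy)
  have e1 : onBx N a (fun x => f x ^ 2) y = ENNReal.ofReal (f (WithLp.toLp 2 y) ^ 2) := by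
    simp [onBx, hy]
  rw [e1]
  simp only [Function.update_eq_self] at key
  refine key.trans (le_of_eq ?_)
  congr 1
  rw [← lintegral_indicator measurableSet_Ioo]
  apply lintegral_congr
  intro t
  by_cases ht : t ∈ Set.Ioo lo hi
  · have := (hupd t).2 ht
    simp only [onBx, Set.indicator_of_mem ht, Set.indicator_of_mem this]
  · have : ¬ (WithLp.toLp 2 (Function.update y j t) : Ed d) ∈ bx N a := fun h => ht ((hupd t).1 h)
    simp only [onBx, Set.indicator_of_notMem ht, Set.indicator_of_notMem this]

/-- Iterating the one-dimensional inequality over distinct coordinate directions bounds the value at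
a point by a partial integral of the mixed derivatives. -/
theorem onBx_list (hN : 0 < N) (a : Ed d) (l : List (Fin d)) (hl : l.Nodup) {f : Ed d → ℝ}
    (hf : Sm N f) (y : Fin d → ℝ) :
    onBx N a (fun x => f x ^ 2) y ≤
      2 ^ l.length * (∫⋯∫⁻_l.toFinset, onBx N a (mixSq N l f) ∂fun _ => volume) y := by
  induction l generalizing f y with
  | nil => simp [mixSq]
  | cons j l ih =>
    have hjl : j ∉ l := (List.nodup_cons.1 hl).1
    have hl' := (List.nodup_cons.1 hl).2
    have hm1 := onBx_measurable a (mixSq_continuousOn hN l hf)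
    have hm2 := onBx_measurable a (mixSq_continuousOn hN l (hf.D hN j))
    have hm := onBx_measurable a (mixSq_continuousOn hN (j :: l) hf)
    refine (onBx_step hN a hf j y).trans ?_
    have hstep : onBx N a (fun x => f x ^ 2 + D N j f x ^ 2) ≤
        fun y => 2 ^ l.length *
          (∫⋯∫⁻_l.toFinset, onBx N a (mixSq N (j :: l) f) ∂fun _ => volume) y := by
      intro z
      rw [onBx_add a (fun x => sq_nonneg _) (fun x => sq_nonneg _)]
      refine (add_le_add (ih hl' hf z) (ih hl' (hf.D hN j) z)).trans (le_of_eq ?_)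
      rw [← mul_add]
      congr 1
      simp only [lmarginal]
      rw [← lintegral_add_left]
      · simp only [mixSq]
        rw [onBx_add a (mixSq_nonneg l f) (mixSq_nonneg l _)]
      · exact hm1.comp measurable_updateFinset
    have h2 := lmarginal_mono (μ := fun _ : Fin d => (volume : Measure ℝ)) (s := {j}) hstep y
    calc _ ≤ 2 * (∫⋯∫⁻_{j}, (fun y => 2 ^ l.length *
          (∫⋯∫⁻_l.toFinset, onBx N a (mixSq N (j :: l) f) ∂fun _ => volume) y)
          ∂fun _ => volume) y := by gcongr
      _ = _ := by
        rw [List.toFinset_cons, Finset.insert_eq, lmarginal_union _ _ hm (by simpa using hjl)]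
        simp only [lmarginal_singleton]
        rw [lintegral_const_mul' _ _ (by simp), List.length_cons, pow_succ]
        ring

/-- Pointwise bound of `f` by the mixed derivatives of order at most one in every direction, over a
box of unit tangential size. -/
theorem sup_bound (hN : 0 < N) {f : Ed d → ℝ} (hf : Sm N f) {a : Ed d} (ha : a ∈ slab d N)
    (hi : IntegrableOn (mixSq N (List.finRange d) f) (slab d N)) :
    f a ^ 2 ≤ 2 ^ d * ∫ x in bx N a, mixSq N (List.finRange d) f x := by
  have h := onBx_list hN a (List.finRange d) (List.nodup_finRange d) hf (WithLp.ofLp a)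
  have hmem : a ∈ bx N a := ⟨ha, fun j _ => by simp⟩
  have hfr : (List.finRange d).toFinset = Finset.univ := by ext; simp
  rw [hfr, lmarginal_univ, List.length_finRange] at h
  have e1 : onBx N a (fun x => f x ^ 2) (WithLp.ofLp a) = ENNReal.ofReal (f a ^ 2) := by
    simp [onBx, hmem]
  have e2 : ∫⁻ y, onBx N a (mixSq N (List.finRange d) f) y ∂(Measure.pi fun _ => volume) =
      ENNReal.ofReal (∫ x in bx N a, mixSq N (List.finRange d) f x) := by
    rw [ofReal_integral_eq_lintegral_ofReal (hi.mono_set fun x hx => hx.1)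
      (Eventually.of_forall fun x => mixSq_nonneg _ f x),
      ← lintegral_indicator (bx_open a).measurableSet,
      ← (PiLp.volume_preserving_toLp (Fin d)).lintegral_comp_emb
        (MeasurableEquiv.toLp 2 (Fin d → ℝ)).measurableEmbedding]
    rfl
  rw [e1, e2] at h
  have h0 : 0 ≤ ∫ x in bx N a, mixSq N (List.finRange d) f x :=
    integral_nonneg fun x => mixSq_nonneg _ f x
  have h3 : (2 : ENNReal) ^ d = ENNReal.ofReal (2 ^ d) := by
    rw [ENNReal.ofReal_pow (by norm_num)]; simp
  rw [h3, ← ENNReal.ofReal_mul (by positivity)] at h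
  exact (ENNReal.ofReal_le_ofReal_iff (by positivity)).1 h

/-- A function whose mixed derivatives are square integrable is uniformly small far out in the
tangential directions. -/
theorem decay (hN : 0 < N) {f : Ed d → ℝ} (hf : Sm N f)
    (hi : IntegrableOn (mixSq N (List.finRange d) f) (slab d N)) {ε : ℝ} (hε : 0 < ε) :
    ∃ R : ℝ, ∀ x ∈ slab d N, ∀ j, j ≠ 0 → R ≤ |x j| → f x ^ 2 < ε := by
  have h1 := cut_lim hi
  set H := mixSq N (List.finRange d) f with hH
  have h2 : Tendsto (fun n => 2 ^ d * ((∫ x in slab d N, H x) - ∫ x in slab d N, cut n x * H x))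
      atTop (𝓝 0) := by
    simpa using (h1.const_sub (∫ x in slab d N, H x)).const_mul (2 ^ d)
  obtain ⟨n, hn⟩ := (h2.eventually (gt_mem_nhds hε)).exists
  -- The box around a point with `|xⱼ| ≥ 2(n + 1) + 1` does not meet the support of `cut n`.
  refine ⟨2 * ((n : ℝ) + 1) + 1, fun a ha j hj haj => ?_⟩
  refine (sup_bound hN hf ha hi).trans_lt (lt_of_le_of_lt ?_ hn)
  gcongr
  have hci := cut_mul_integrable (mixSq_continuousOn hN (List.finRange d) hf) n
  rw [← integral_sub hi hci]
  have hsub : bx N a ⊆ slab d N := fun x hx => hx.1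
  have heq : ∫ x in bx N a, H x = ∫ x in bx N a, (H x - cut n x * H x) := by
    apply setIntegral_congr_fun (bx_open a).measurableSet
    intro x hx
    have : 2 * ((n : ℝ) + 1) ≤ |x j| := by
      have h4 := hx.2 j hj
      have h5 := abs_sub_abs_le_abs_sub (a j) (x j)
      rw [abs_sub_comm] at h5
      linarith
    simp only
    rw [cut_eq_zero hj this, zero_mul, sub_zero]
  rw [heq]
  apply setIntegral_mono_set (hi.sub hci) _ hsub.eventuallyLE
  refine Eventually.of_forall fun x => ?_
  have h6 := mixSq_nonneg (N := N) (List.finRange d) f x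
  have h7 := cut_le_one n x
  simp only [Pi.zero_apply, Pi.sub_apply, hH]
  nlinarith

end sobolev

/-! ### Energy estimates for the linearised system -/

/-- Square integrability on the open slab. -/
abbrev L2 {d : ℕ} (N : ℕ) [NeZero d] (f : Ed d → ℝ) : Prop :=
  IntegrableOn (fun x => f x ^ 2) (slab d N)

/-- Real form of the equation `ic ∂₁(f + ig) + Δ(f + ig) + (h + il) = 0` on the slab, with all
functions smooth up to the boundary. -/
structure Sys {d : ℕ} (N : ℕ) [NeZero d] (c : ℝ) (f g h l : Ed d → ℝ) : Prop where
  sf : Sm N f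
  sg : Sm N g
  sh : Sm N h
  sl : Sm N l
  ef : ∀ x ∈ slab d N, ∑ i, D N i (D N i f) x = c * D N 0 g x - h x
  eg : ∀ x ∈ slab d N, ∑ i, D N i (D N i g) x = -c * D N 0 f x - l x

section energy

variable {d N : ℕ} [NeZero d]

theorem integrable_of_le {f g : Ed d → ℝ} (hf : ContinuousOn f (slabCl d N))
    (hg : IntegrableOn g (slab d N)) (h : ∀ x ∈ slab d N, |f x| ≤ g x) :
    IntegrableOn f (slab d N) :=
  hg.mono' ((hf.mono slab_sub).aestronglyMeasurable measurable_slab)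
    ((ae_restrict_iff' measurable_slab).2 (Eventually.of_forall h))

theorem L2.congr {f g : Ed d → ℝ} (hf : L2 N f) (h : ∀ x ∈ slab d N, f x = g x) : L2 N g :=
  IntegrableOn.congr_fun hf (fun x hx => by simp only [h x hx]) measurable_slab

theorem sm_coord (i : Fin d) : Sm N (fun x : Ed d => x i) := by
  have : ContDiff ℝ (⊤ : ℕ∞) (fun x : Ed d => x i) := by fun_prop
  exact this.contDiffOn

theorem D_coord (i : Fin d) {x : Ed d} (hx : x ∈ slab d N) :
    D N i (fun y : Ed d => y i) x = 1 := by
  apply D_of (sm_coord i) hx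
  simpa using (hasDerivAt_id (0 : ℝ)).const_add (x i)

/-- Divergence of the field whose `j`-th component is `f` and whose other components vanish. -/
theorem sum_D_single (j : Fin d) (f : Ed d → ℝ) (x : Ed d) :
    ∑ i, D N i (fun y => if i = j then f y else 0) x = D N j f x := by
  rw [Finset.sum_eq_single j]
  · simp
  · intro i _ hi
    simp [hi, D_const]
  · simp

theorem sm_single {f : Ed d → ℝ} (hf : Sm N f) (i j : Fin d) :
    Sm N (fun y => if i = j then f y else 0) := by
  by_cases h : i = j
  · simpa [h] using hf
  · simpa [h] using (contDiffOn_const : Sm N fun _ : Ed d => (0 : ℝ))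

theorem cut_sq_sm (n : ℕ) : Sm N (fun x : Ed d => cut n x ^ 2) := (cut_sm n).pow 2

theorem D_cut_sq (n : ℕ) (i : Fin d) {x : Ed d} (hx : x ∈ slab d N) :
    D N i (fun y => cut n y ^ 2) x = 2 * cut n x * D N i (cut n) x := by
  have : (fun y : Ed d => cut n y ^ 2) = fun y => cut n y * cut n y := by
    funext y; ring
  rw [this, D_mul (cut_sm n) (cut_sm n) hx]
  ring

theorem cut_sq_mul_integrable {g : Ed d → ℝ} (hg : ContinuousOn g (slabCl d N)) (n : ℕ) :
    IntegrableOn (fun x => cut n x ^ 2 * g x) (slab d N) := by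
  have := cut_mul_integrable (N := N) ((cut_contDiff n).continuous.continuousOn.mul hg) n
  refine this.congr (Eventually.of_forall fun x => ?_)
  simp only [Pi.mul_apply]
  ring

/-- Integration by parts with weight `cut n ^ 2`. -/
theorem ibp_cut_sq (hN : 0 < N) {F : Fin d → Ed d → ℝ} (hF : ∀ i, Sm N (F i))
    (h0 : ∀ x ∈ slabBdry d N, F 0 x = 0) (n : ℕ) :
    ∫ x in slab d N, (cut n x ^ 2 * (∑ i, D N i (F i) x) +
      ∑ i, 2 * cut n x * D N i (cut n) x * F i x) = 0 := by
  rw [← ibp_weight hN hF h0 (cut_sq_sm n) (R := 2 * ((n : ℝ) + 1))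
    (fun x _ j hj h => by rw [cut_eq_zero hj h]; ring)]
  apply setIntegral_congr_fun measurable_slab
  intro x hx
  simp only
  congr 1
  exact Finset.sum_congr rfl fun i _ => by rw [D_cut_sq n i hx]

/-- Poincaré inequality: the slab is bounded in the first direction. -/
theorem poincare (hN : 0 < N) {f : Ed d → ℝ} (hf : Sm N f) (h0 : ∀ x ∈ slabBdry d N, f x = 0)
    (h1 : L2 N (D N 0 f)) : L2 N f := by
  -- `q` is the divergence of `x₁ f² e₁`.
  set q : Ed d → ℝ := fun x => f x ^ 2 + 2 * x 0 * f x * D N 0 f x with hq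
  have hsm : Sm N (fun x : Ed d => x 0 * (f x * f x)) := (sm_coord 0).mul (hf.mul hf)
  have hqc : ContinuousOn q (slabCl d N) :=
    (hf.continuousOn.pow 2).add (((continuousOn_const.mul (cont_coord 0).continuousOn).mul
      hf.continuousOn).mul (hf.D hN 0).continuousOn)
  have key : ∀ n, ∫ x in slab d N, cut n x ^ 2 * q x = 0 := by
    intro n
    rw [← ibp_cut_sq hN (fun i => sm_single hsm i 0)
      (fun x hx => by simp [h0 x hx]) n]
    apply setIntegral_congr_fun measurable_slab
    intro x hx
    simp only
    rw [sum_D_single, Finset.sum_eq_zero, add_zero, D_mul (sm_coord 0) (hf.mul hf) hx,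
      D_mul hf hf hx, D_coord 0 hx]
    · simp only [hq]; ring
    · intro i _
      by_cases hi : i = 0
      · subst hi; rw [cut_D_zero n hx]; ring
      · simp [hi]
  have hd : IntegrableOn (fun x => 4 * (N : ℝ) ^ 2 * D N 0 f x ^ 2) (slab d N) := h1.const_mul _
  refine cut_fatou (hf.continuousOn.pow 2) (fun x _ => sq_nonneg _)
    (K := ∫ x in slab d N, 4 * (N : ℝ) ^ 2 * D N 0 f x ^ 2) fun n => ?_
  have e : ∫ x in slab d N, (2 * (cut n x ^ 2 * q x) + 4 * (N : ℝ) ^ 2 * D N 0 f x ^ 2) =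
      ∫ x in slab d N, 4 * (N : ℝ) ^ 2 * D N 0 f x ^ 2 := by
    rw [integral_add ((cut_sq_mul_integrable hqc n).const_mul 2) hd, integral_const_mul, key n]
    ring
  rw [← e]
  refine integral_mono_slab (cut_sq_mul_integrable (hf.continuousOn.pow 2) n)
    (((cut_sq_mul_integrable hqc n).const_mul 2).add hd) fun x hx => ?_
  have c0 := cut_nonneg n x
  have c1 := cut_le_one n x
  have hx0 : x 0 ^ 2 ≤ (N : ℝ) ^ 2 := by
    rw [sq_le_sq, abs_of_nonneg (Nat.cast_nonneg N : (0 : ℝ) ≤ N)]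
    exact abs_le.2 ⟨hx.1.le, hx.2.le⟩
  have hcc : cut n x ^ 2 ≤ 1 := by nlinarith
  have hz : 0 ≤ cut n x ^ 2 := sq_nonneg _
  have a1 : f x ^ 2 ≤ 2 * q x + 4 * (N : ℝ) ^ 2 * D N 0 f x ^ 2 := by
    simp only [hq]
    nlinarith [sq_nonneg (f x + 2 * x 0 * D N 0 f x), mul_le_mul_of_nonneg_right hx0
      (sq_nonneg (D N 0 f x))]
  have a2 : 0 ≤ 4 * (N : ℝ) ^ 2 * D N 0 f x ^ 2 := by positivity
  nlinarith [mul_le_mul_of_nonneg_left a1 hz]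

/-- Differentiating the system in a tangential direction. -/
theorem Sys.D (hN : 0 < N) {c : ℝ} {f g h l : Ed d → ℝ} (hs : Sys N c f g h l) (j : Fin d) :
    Sys N c (D N j f) (D N j g) (D N j h) (D N j l) := by
  have hlap : ∀ {f : Ed d → ℝ}, Sm N f → ∀ x ∈ slab d N,
      ∑ i, _root_.D N i (_root_.D N i (_root_.D N j f)) x =
        _root_.D N j (fun y => ∑ i, _root_.D N i (_root_.D N i f) y) x := by
    intro f hf x hx
    have h1 : _root_.D N j (fun y => ∑ i, _root_.D N i (_root_.D N i f) y) x =
        ∑ i, _root_.D N j (_root_.D N i (_root_.D N i f)) x := by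
      apply D_of (ContDiffOn.sum fun i _ => (hf.D hN i).D hN i) hx
      exact HasDerivAt.fun_sum fun i _ => ((hf.D hN i).D hN i).dh hx j
    rw [h1]
    refine Finset.sum_congr rfl fun i _ => ?_
    rw [D_comm (hf.D hN i) hx j i]
    exact D_congr (fun y hy => D_comm hf hy i j) hx i
  refine ⟨hs.sf.D hN j, hs.sg.D hN j, hs.sh.D hN j, hs.sl.D hN j, fun x hx => ?_, fun x hx => ?_⟩
  · rw [hlap hs.sf x hx, D_congr hs.ef hx, D_sub (contDiffOn_const.mul (hs.sg.D hN 0)) hs.sh hx,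
      D_mul contDiffOn_const (hs.sg.D hN 0) hx, D_const, D_comm hs.sg hx]
    ring
  · rw [hlap hs.sg x hx, D_congr hs.eg hx, D_sub (contDiffOn_const.mul (hs.sf.D hN 0)) hs.sl hx,
      D_mul contDiffOn_const (hs.sf.D hN 0) hx, D_const, D_comm hs.sf hx]
    ring

theorem young_rot (c f g p q : ℝ) : c * (f * q - g * p) ≥
    -(1 / 8 * (p ^ 2 + q ^ 2)) - 2 * c ^ 2 * (f ^ 2 + g ^ 2) := by
  nlinarith [sq_nonneg (4 * c * f + q), sq_nonneg (4 * c * g - p)]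

theorem young_pair (p q h l : ℝ) : p * h + q * l ≥
    -(1 / 8 * (p ^ 2 + q ^ 2)) - 2 * (h ^ 2 + l ^ 2) := by
  nlinarith [sq_nonneg (4 * h + p), sq_nonneg (4 * l + q)]

theorem young_cut (a b f g p q : ℝ) : 2 * a * b * (f * p + g * q) ≥
    -(1 / 4 * a ^ 2) * (p ^ 2 + q ^ 2) - 4 * b ^ 2 * (f ^ 2 + g ^ 2) := by
  nlinarith [sq_nonneg (4 * b * f + a * p), sq_nonneg (4 * b * g + a * q)]

theorem abs_pair_le (f g h l : ℝ) : |f * h + g * l| ≤ f ^ 2 + g ^ 2 + h ^ 2 + l ^ 2 := by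
  rw [abs_le]
  constructor <;> nlinarith [sq_nonneg (f + h), sq_nonneg (g + l), sq_nonneg (f - h),
    sq_nonneg (g - l)]

theorem abs_two_mul_le {a b C : ℝ} (ha : a ^ 2 ≤ 1) (hb : b ^ 2 ≤ C ^ 2) :
    |2 * a * b| ≤ C ^ 2 + 1 := by
  rw [abs_le]
  constructor <;> nlinarith [sq_nonneg (a + b), sq_nonneg (a - b)]

set_option maxHeartbeats 800000 in
/-- Caccioppoli estimate for a right-hand side that is itself a tangential derivative `∂ⱼ(h, l)`: it
enters only through `h` and `l`, by integrating `∂ⱼ` by parts. -/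
theorem caccioppoli (hN : 0 < N) {c : ℝ} {f g h l : Ed d → ℝ} (j : Fin d)
    (sh : Sm N h) (sl : Sm N l)
    (hs : Sys N c f g (D N j h) (D N j l)) (hj : j ≠ 0)
    (f0 : ∀ x ∈ slabBdry d N, f x = 0) (g0 : ∀ x ∈ slabBdry d N, g x = 0)
    (If : L2 N f) (Ig : L2 N g) (Ih : L2 N h) (Il : L2 N l) (k : Fin d) :
    L2 N (D N k f) ∧ L2 N (D N k g) := by
  obtain ⟨C, hC0, hC⟩ := cut_D_bound d N
  have sf := hs.sf
  have sg := hs.sg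
  set G : Ed d → ℝ := fun x => ∑ i, (D N i f x ^ 2 + D N i g x ^ 2) with hG
  have hGc : ContinuousOn G (slabCl d N) := continuousOn_finsetSum _ fun i _ =>
    ((sf.D hN i).continuousOn.pow 2).add ((sg.D hN i).continuousOn.pow 2)
  set M : Ed d → ℝ := fun x => f x ^ 2 + g x ^ 2 + h x ^ 2 + l x ^ 2 with hM
  have hMi : IntegrableOn M (slab d N) := ((If.add Ig).add Ih).add Il
  -- The field `½ ∇(f² + g²) + (fh + gl) eⱼ`; in its divergence the terms `f ∂ⱼh + g ∂ⱼl` cancel.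
  set A : Fin d → Ed d → ℝ := fun i y => f y * D N i f y + g y * D N i g y with hA
  set B : Fin d → Ed d → ℝ := fun i y => if i = j then f y * h y + g y * l y else 0 with hB
  have hAs : ∀ i, Sm N (A i) := fun i => (sf.mul (sf.D hN i)).add (sg.mul (sg.D hN i))
  have hBs0 : Sm N (fun y => f y * h y + g y * l y) := (sf.mul sh).add (sg.mul sl)
  have hBs : ∀ i, Sm N (B i) := fun i => sm_single hBs0 i j
  set F : Fin d → Ed d → ℝ := fun i y => A i y + B i y with hF
  have hFs : ∀ i, Sm N (F i) := fun i => (hAs i).add (hBs i)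
  have hF0 : ∀ x ∈ slabBdry d N, F 0 x = 0 := by
    intro x hx
    simp [hF, hA, hB, f0 x hx, g0 x hx]
  have hdiv : ∀ x ∈ slab d N, ∑ i, D N i (F i) x =
      G x + c * (f x * D N 0 g x - g x * D N 0 f x) + (D N j f x * h x + D N j g x * l x) := by
    intro x hx
    have e1 : ∀ i, D N i (A i) x = (D N i f x ^ 2 + D N i g x ^ 2) +
        (f x * D N i (D N i f) x + g x * D N i (D N i g) x) := by
      intro i
      rw [D_add (sf.mul (sf.D hN i)) (sg.mul (sg.D hN i)) hx, D_mul sf (sf.D hN i) hx,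
        D_mul sg (sg.D hN i) hx]
      ring
    have e2 : D N j (fun y => f y * h y + g y * l y) x =
        D N j f x * h x + f x * D N j h x + (D N j g x * l x + g x * D N j l x) := by
      rw [D_add (sf.mul sh) (sg.mul sl) hx, D_mul sf sh hx, D_mul sg sl hx]
    have e3 : ∑ i, D N i (F i) x = ∑ i, D N i (A i) x + ∑ i, D N i (B i) x := by
      rw [← Finset.sum_add_distrib]
      exact Finset.sum_congr rfl fun i _ => D_add (hAs i) (hBs i) hx i
    have e4 : ∑ i, (f x * D N i (D N i f) x + g x * D N i (D N i g) x) =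
        f x * ∑ i, D N i (D N i f) x + g x * ∑ i, D N i (D N i g) x := by
      rw [Finset.sum_add_distrib, Finset.mul_sum, Finset.mul_sum]
    rw [e3, sum_D_single, e2, Finset.sum_congr rfl fun i _ => e1 i, Finset.sum_add_distrib, e4,
      hs.ef x hx, hs.eg x hx]
    simp only [hG]
    ring
  set K : ℝ := 2 * c ^ 2 + 2 + d * (5 * C ^ 2 + 1) with hK
  have hGint : IntegrableOn G (slab d N) := by
    refine cut_fatou hGc (fun x _ => Finset.sum_nonneg fun i _ => by positivity)
      (K := 2 * K * ∫ x in slab d N, M x) fun n => ?_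
    set Q : Ed d → ℝ := fun x => cut n x ^ 2 * (∑ i, D N i (F i) x) +
      ∑ i, 2 * cut n x * D N i (cut n) x * F i x with hQ
    have hQ0 : ∫ x in slab d N, Q x = 0 := ibp_cut_sq hN hFs hF0 n
    have hQi : IntegrableOn Q (slab d N) := by
      apply integrable_of_far (R := 2 * ((n : ℝ) + 1))
      · refine (((cut_sm n).continuousOn.pow 2).mul (sm_continuousOn_sum_D hN hFs)).add ?_
        exact continuousOn_finsetSum _ fun i _ =>
          (((continuousOn_const.mul (cut_sm n).continuousOn).mul
            ((cut_sm n).D hN i).continuousOn).mul (hFs i).continuousOn)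
      · intro x hx j hj h
        simp only [hQ, cut_eq_zero hj h.le]
        simp
    have e : ∫ x in slab d N, (2 * Q x + 2 * K * M x) = 2 * K * ∫ x in slab d N, M x := by
      rw [integral_add (hQi.const_mul 2) (hMi.const_mul _), integral_const_mul,
        integral_const_mul, hQ0]
      ring
    rw [← e]
    refine integral_mono_slab (cut_sq_mul_integrable hGc n)
      ((hQi.const_mul 2).add (hMi.const_mul _)) fun x hx => ?_
    have c0 := cut_nonneg n x
    have c1 := cut_le_one n x
    set χ := cut n x
    have hz : 0 ≤ χ ^ 2 := sq_nonneg _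
    have hcc : χ ^ 2 ≤ 1 := by nlinarith
    have hM0 : 0 ≤ M x := by simp only [hM]; positivity
    have hGk : ∀ i, D N i f x ^ 2 + D N i g x ^ 2 ≤ G x := fun i =>
      Finset.single_le_sum (f := fun i => D N i f x ^ 2 + D N i g x ^ 2)
        (fun i _ => by positivity) (Finset.mem_univ i)
    have b1 : ∑ i, D N i (F i) x ≥ 3 / 4 * G x - (2 * c ^ 2 + 2) * M x := by
      rw [hdiv x hx]
      have g0' := hGk 0
      have gj' := hGk j
      have t1 : c * (f x * D N 0 g x - g x * D N 0 f x) ≥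
          -(1 / 8 * (D N 0 f x ^ 2 + D N 0 g x ^ 2)) - 2 * c ^ 2 * (f x ^ 2 + g x ^ 2) := by
        exact young_rot c (f x) (g x) _ _
      have t2 : D N j f x * h x + D N j g x * l x ≥
          -(1 / 8 * (D N j f x ^ 2 + D N j g x ^ 2)) - 2 * (h x ^ 2 + l x ^ 2) := by
        exact young_pair _ _ _ _
      have t3 : (2 * c ^ 2 + 2) * M x ≥
          2 * c ^ 2 * (f x ^ 2 + g x ^ 2) + 2 * (h x ^ 2 + l x ^ 2) := by
        simp only [hM]
        nlinarith [sq_nonneg (f x), sq_nonneg (g x), mul_nonneg (sq_nonneg c) (sq_nonneg (h x)),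
          mul_nonneg (sq_nonneg c) (sq_nonneg (l x))]
      linarith
    have b2 : ∑ i, 2 * χ * D N i (cut n) x * F i x ≥
        ∑ i, (-(1 / 4 * χ ^ 2) * (D N i f x ^ 2 + D N i g x ^ 2) - (5 * C ^ 2 + 1) * M x) := by
      apply Finset.sum_le_sum
      intro i _
      have hCi : D N i (cut n) x ^ 2 ≤ C ^ 2 := by
        have h1 : |D N i (cut n) x| ≤ C := by
          refine (hC n i x hx).trans ?_
          have : ((n : ℝ) + 1)⁻¹ ≤ 1 := inv_le_one_of_one_le₀ (by linarith [n.cast_nonneg (α := ℝ)])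
          calc C * ((n : ℝ) + 1)⁻¹ ≤ C * 1 := by gcongr
            _ = C := mul_one C
        rw [sq_le_sq, abs_of_nonneg hC0]
        exact h1
      set χi := D N i (cut n) x
      have hfg : f x ^ 2 + g x ^ 2 ≤ M x := by
        simp only [hM]; nlinarith [sq_nonneg (h x), sq_nonneg (l x)]
      have p1 : 2 * χ * χi * A i x ≥ -(1 / 4 * χ ^ 2) * (D N i f x ^ 2 + D N i g x ^ 2)
          - 4 * C ^ 2 * M x := by
        have q1 : 2 * χ * χi * A i x ≥ -(1 / 4 * χ ^ 2) * (D N i f x ^ 2 + D N i g x ^ 2)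
          - 4 * χi ^ 2 * (f x ^ 2 + g x ^ 2) := by
          simp only [hA]
          exact young_cut _ _ _ _ _ _
        have q2 : χi ^ 2 * (f x ^ 2 + g x ^ 2) ≤ C ^ 2 * M x :=
          mul_le_mul hCi hfg (by positivity) (by positivity)
        linarith
      have p2 : 2 * χ * χi * B i x ≥ -((C ^ 2 + 1) * M x) := by
        have hBb : |B i x| ≤ M x := by
          simp only [hB]
          split_ifs
          · exact abs_pair_le _ _ _ _
          · simpa using hM0
        have q1 : |2 * χ * χi| ≤ C ^ 2 + 1 := by
          exact abs_two_mul_le hcc hCi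
        have q2 : |2 * χ * χi * B i x| ≤ (C ^ 2 + 1) * M x := by
          rw [abs_mul]
          exact mul_le_mul q1 hBb (abs_nonneg _) (by positivity)
        exact (abs_le.1 q2).1
      have : 2 * χ * χi * F i x = 2 * χ * χi * A i x + 2 * χ * χi * B i x := by
        simp only [hF]; ring
      rw [this]
      linarith
    rw [Finset.sum_sub_distrib, ← Finset.mul_sum, Finset.sum_const, Finset.card_univ,
      Fintype.card_fin, nsmul_eq_mul] at b2
    change _ ≥ -(1 / 4 * χ ^ 2) * G x - _ at b2
    have b3 := mul_le_mul_of_nonneg_left b1 hz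
    have b4 : χ ^ 2 * ((2 * c ^ 2 + 2) * M x) ≤ (2 * c ^ 2 + 2) * M x :=
      mul_le_of_le_one_left (by positivity) hcc
    have : Q x ≥ 1 / 2 * (χ ^ 2 * G x) - K * M x := by
      simp only [hQ, hK]
      linear_combination b3 + b2 + b4
    linarith
  have hsub : ∀ i, ∀ x ∈ slab d N, D N i f x ^ 2 + D N i g x ^ 2 ≤ G x := fun i x _ =>
    Finset.single_le_sum (f := fun i => D N i f x ^ 2 + D N i g x ^ 2)
      (fun i _ => by positivity) (Finset.mem_univ i)
  constructor
  · refine integrable_of_le ((sf.D hN k).continuousOn.pow 2) hGint fun x hx => ?_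
    rw [abs_of_nonneg (sq_nonneg _)]
    nlinarith [hsub k x hx, sq_nonneg (D N k g x)]
  · refine integrable_of_le ((sg.D hN k).continuousOn.pow 2) hGint fun x hx => ?_
    rw [abs_of_nonneg (sq_nonneg _)]
    nlinarith [hsub k x hx, sq_nonneg (D N k f x)]

end energy

/-! ### Upper bound on the density -/

/-- The slab problem for `ψ = u + iv` in real form. -/
structure Sol {d : ℕ} (N : ℕ) [NeZero d] (c : ℝ) (u v : Ed d → ℝ) : Prop where
  sys : Sys N c u v (fun x => (1 - (u x ^ 2 + v x ^ 2)) * u x)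
    (fun x => (1 - (u x ^ 2 + v x ^ 2)) * v x)
  bu : ∀ x ∈ slabBdry d N, u x = 1
  bv : ∀ x ∈ slabBdry d N, v x = 0
  Iu : ∀ i, L2 N (D N i u)
  Iv : ∀ i, L2 N (D N i v)
  Iw : L2 N (fun x => 1 - (u x ^ 2 + v x ^ 2))

section solution

variable {d N : ℕ} [NeZero d]

theorem eq_zero_of_integral_nonpos {p : Ed d → ℝ} (hp : ContinuousOn p (slabCl d N))
    (h0 : ∀ x ∈ slab d N, 0 ≤ p x) (hi : IntegrableOn p (slab d N))
    (h : ∫ x in slab d N, p x ≤ 0) : ∀ x ∈ slab d N, p x = 0 := by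
  have h1 : ∫ x in slab d N, p x = 0 :=
    le_antisymm h (setIntegral_nonneg measurable_slab h0)
  have h2 : p =ᵐ[volume.restrict (slab d N)] 0 :=
    (setIntegral_eq_zero_iff_of_nonneg_ae
      ((ae_restrict_iff' measurable_slab).2 (Eventually.of_forall h0)) hi).1 h1
  exact Measure.eqOn_open_of_ae_eq h2 isOpen_slab (hp.mono slab_sub) continuousOn_const

theorem Sm.w {u v : Ed d → ℝ} (hu : Sm N u) (hv : Sm N v) :
    Sm N (fun x => u x ^ 2 + v x ^ 2) := (hu.pow 2).add (hv.pow 2)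

theorem D_w {u v : Ed d → ℝ} (hu : Sm N u) (hv : Sm N v) {x : Ed d} (hx : x ∈ slab d N)
    (i : Fin d) : D N i (fun x => u x ^ 2 + v x ^ 2) x =
      2 * (u x * D N i u x + v x * D N i v x) := by
  rw [D_add (hu.pow 2) (hv.pow 2) hx]
  have h : ∀ {f : Ed d → ℝ}, Sm N f → D N i (fun x => f x ^ 2) x = 2 * (f x * D N i f x) := by
    intro f hf
    have : (fun x => f x ^ 2) = fun x => f x * f x := by funext; ring
    rw [this, D_mul hf hf hx]
    ring
  rw [h hu, h hv]
  ring

/-- The divergence of `½ ∇|ψ|²`. -/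
theorem Sol.div_V (hN : 0 < N) {c : ℝ} {u v : Ed d → ℝ} (hs : Sol N c u v) {x : Ed d}
    (hx : x ∈ slab d N) :
    ∑ i, D N i (fun y => u y * D N i u y + v y * D N i v y) x =
      ∑ i, (D N i u x ^ 2 + D N i v x ^ 2) + c * (u x * D N 0 v x - v x * D N 0 u x)
        - (1 - (u x ^ 2 + v x ^ 2)) * (u x ^ 2 + v x ^ 2) := by
  have su := hs.sys.sf
  have sv := hs.sys.sg
  have e1 : ∀ i, D N i (fun y => u y * D N i u y + v y * D N i v y) x =
      (D N i u x ^ 2 + D N i v x ^ 2) +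
        (u x * D N i (D N i u) x + v x * D N i (D N i v) x) := by
    intro i
    rw [D_add (su.mul (su.D hN i)) (sv.mul (sv.D hN i)) hx, D_mul su (su.D hN i) hx,
      D_mul sv (sv.D hN i) hx]
    ring
  have e4 : ∑ i, (u x * D N i (D N i u) x + v x * D N i (D N i v) x) =
      u x * ∑ i, D N i (D N i u) x + v x * ∑ i, D N i (D N i v) x := by
    rw [Finset.sum_add_distrib, Finset.mul_sum, Finset.mul_sum]
  rw [Finset.sum_congr rfl fun i _ => e1 i, Finset.sum_add_distrib, e4, hs.sys.ef x hx,
    hs.sys.eg x hx]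
  ring

/-- Completing the square: the drift term costs at most `c²/4 · |ψ|²`. -/
theorem rot_lower (c u v p q S : ℝ) (h : p ^ 2 + q ^ 2 ≤ S) :
    -(c ^ 2 / 4 * (u ^ 2 + v ^ 2)) ≤ S + c * (u * q - v * p) := by
  nlinarith [sq_nonneg (q + c / 2 * u), sq_nonneg (p - c / 2 * v)]

/-- Where `|ψ|²` exceeds `1` by a fixed amount, it is controlled by the potential energy density. -/
theorem density_le_sq {w m : ℝ} (hm : 0 < m) (h : m ≤ w - 1) :
    w ≤ (1 / m + 1 / m ^ 2) * (1 - w) ^ 2 := by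
  have h1 : 1 ≤ (w - 1) / m := by rwa [le_div_iff₀ hm, one_mul]
  have h2 : (1 / m + 1 / m ^ 2) * (1 - w) ^ 2 = (w - 1) * ((w - 1) / m) + ((w - 1) / m) ^ 2 := by
    field_simp
    ring
  rw [h2]
  nlinarith

/-- Maximum principle: `|ψ|² ≤ 1 + c²/4`. The equation for `½ ∇|ψ|²` is tested against
`G(|ψ|²)`, with `G` a smooth nondecreasing function supported in `(1 + c²/4, ∞)`. -/
theorem Sol.w_le (hN : 0 < N) {c : ℝ} (hc : 0 < c) {u v : Ed d → ℝ} (hs : Sol N c u v) :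
    ∀ x ∈ slabCl d N, u x ^ 2 + v x ^ 2 ≤ 1 + c ^ 2 / 4 := by
  have su := hs.sys.sf
  have sv := hs.sys.sg
  set w : Ed d → ℝ := fun x => u x ^ 2 + v x ^ 2 with hw
  have sw : Sm N w := su.w sv
  set m : ℝ := c ^ 2 / 4 with hm
  have hm0 : 0 < m := by positivity
  set k : ℝ := 1 + m with hk
  set G : ℝ → ℝ := fun s => Real.smoothTransition (s - k) with hG
  have sG : ContDiff ℝ (⊤ : ℕ∞) G :=
    Real.smoothTransition.contDiff.comp (contDiff_id.sub contDiff_const)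
  have G0 : ∀ s, 0 ≤ G s := fun s => Real.smoothTransition.nonneg _
  have G1 : ∀ s, G s ≤ 1 := fun s => Real.smoothTransition.le_one _
  have Gz : ∀ s, s ≤ k → G s = 0 := fun s h =>
    Real.smoothTransition.zero_of_nonpos (by linarith)
  have Gpos : ∀ s, k < s → 0 < G s := fun s h =>
    Real.smoothTransition.pos_of_pos (by linarith)
  have Gm : Monotone G := fun a b h => Real.smoothTransition.monotone (by linarith)
  have Gd : ∀ s, 0 ≤ deriv G s := fun s => Gm.deriv_nonneg
  set V : Fin d → Ed d → ℝ := fun i y => u y * D N i u y + v y * D N i v y with hV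
  have sV : ∀ i, Sm N (V i) := fun i => (su.mul (su.D hN i)).add (sv.mul (sv.D hN i))
  have sGw : Sm N (fun y => G (w y)) := sG.comp_contDiffOn sw
  set F : Fin d → Ed d → ℝ := fun i y => G (w y) * V i y with hF
  have sF : ∀ i, Sm N (F i) := fun i => sGw.mul (sV i)
  have F0 : ∀ x ∈ slabBdry d N, F 0 x = 0 := by
    intro x hx
    have : w x = 1 := by simp [hw, hs.bu x hx, hs.bv x hx]
    simp [hF, this, Gz 1 (by linarith)]
  -- A lower bound for the divergence of `F`, positive exactly where the claim fails.
  set p : Ed d → ℝ := fun x => G (w x) * (w x * (w x - k)) with hp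
  have pc : ContinuousOn p (slabCl d N) :=
    sGw.continuousOn.mul (sw.continuousOn.mul (sw.continuousOn.sub continuousOn_const))
  have w0 : ∀ x, 0 ≤ w x := fun x => by simp only [hw]; positivity
  have p0 : ∀ x, 0 ≤ p x := by
    intro x
    rcases le_or_gt (w x) k with h | h
    · simp [hp, Gz _ h]
    · exact mul_nonneg (G0 _) (mul_nonneg (w0 x) (by linarith))
  have hdiv : ∀ x ∈ slab d N, p x ≤ ∑ i, D N i (F i) x := by
    intro x hx
    have e : ∀ i, D N i (F i) x = deriv G (w x) * (2 * V i x ^ 2) + G (w x) * D N i (V i) x := by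
      intro i
      rw [D_mul sGw (sV i) hx, D_comp sw sG hx, D_w su sv hx]
      simp only [hV]
      ring
    rw [Finset.sum_congr rfl fun i _ => e i, Finset.sum_add_distrib, ← Finset.mul_sum,
      ← Finset.mul_sum, ← Finset.mul_sum, hs.div_V hN hx]
    have h1 : 0 ≤ deriv G (w x) * (2 * ∑ i, V i x ^ 2) :=
      mul_nonneg (Gd _) (mul_nonneg two_pos.le (Finset.sum_nonneg fun i _ => by positivity))
    have h2 := rot_lower c (u x) (v x) (D N 0 u x) (D N 0 v x) _
      (Finset.single_le_sum (f := fun i => D N i u x ^ 2 + D N i v x ^ 2)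
        (fun i _ => by positivity) (Finset.mem_univ 0))
    have h3 : p x ≤ G (w x) * (∑ i, (D N i u x ^ 2 + D N i v x ^ 2)
        + c * (u x * D N 0 v x - v x * D N 0 u x)
        - (1 - (u x ^ 2 + v x ^ 2)) * (u x ^ 2 + v x ^ 2)) := by
      apply mul_le_mul_of_nonneg_left _ (G0 _)
      simp only [hw, hk, hm]
      linarith
    linarith
  have hint : ∀ i, IntegrableOn (F i) (slab d N) := by
    intro i
    refine integrable_of_le (sF i).continuousOn
      (((hs.Iu i).add (hs.Iv i)).add (hs.Iw.const_mul (1 / m + 1 / m ^ 2))) fun x hx => ?_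
    simp only [Pi.add_apply]
    have hC : 0 ≤ 1 / m + 1 / m ^ 2 := by positivity
    rcases le_or_gt (w x) k with h | h
    · simp only [hF, Gz _ h, zero_mul, abs_zero]
      positivity
    · have h1 := density_le_sq hm0 (by linarith : m ≤ w x - 1)
      have h2 : |V i x| ≤ D N i u x ^ 2 + D N i v x ^ 2 + w x := by
        have := abs_pair_le (u x) (v x) (D N i u x) (D N i v x)
        simp only [hV, hw]
        linarith
      have h3 : |F i x| ≤ |V i x| := by
        simp only [hF, abs_mul, abs_of_nonneg (G0 _)]
        exact mul_le_of_le_one_left (abs_nonneg _) (G1 _)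
      exact h3.trans (h2.trans (add_le_add_right h1 _))
  have hlim := ibp_lim hN sF F0 fun i _ => hint i
  have sdiv := sm_continuousOn_sum_D hN sF
  have hle : ∀ n, ∫ x in slab d N, cut n x * p x ≤
      ∫ x in slab d N, cut n x * ∑ i, D N i (F i) x := fun n =>
    integral_mono_slab (cut_mul_integrable pc n) (cut_mul_integrable sdiv n) fun x hx =>
      mul_le_mul_of_nonneg_left (hdiv x hx) (cut_nonneg n x)
  obtain ⟨K, hK⟩ := hlim.bddAbove_range
  have hpi : IntegrableOn p (slab d N) := by
    refine cut_fatou pc (fun x _ => p0 x) (K := K) fun n => ?_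
    refine le_trans ?_ ((hle n).trans (hK ⟨n, rfl⟩))
    refine integral_mono_slab (cut_sq_mul_integrable pc n) (cut_mul_integrable pc n)
      fun x hx => ?_
    refine mul_le_mul_of_nonneg_right ?_ (p0 x)
    nlinarith [cut_nonneg n x, cut_le_one n x]
  have hp0 : ∫ x in slab d N, p x ≤ 0 :=
    le_of_tendsto_of_tendsto' (cut_lim hpi) hlim hle
  have hz := eq_zero_of_integral_nonpos pc (fun x _ => p0 x) hpi hp0
  intro x hx
  rw [slabCl_eq] at hx
  rcases hx with hx | hx
  · by_contra! h
    have h1 : 0 < p x :=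
      mul_pos (Gpos _ h) (mul_pos (by simp only [hw]; linarith) (by simp only [hw]; linarith))
    exact h1.ne' (hz x hx)
  · simp only [hs.bu x hx, hs.bv x hx]
    linarith

end solution

/-! ### Regularity in the tangential directions and behaviour at infinity -/

section regularity

variable {d N : ℕ} [NeZero d]

theorem D_sub_one (u : Ed d → ℝ) (i : Fin d) : D N i (fun x => u x - 1) = D N i u := by
  funext x
  simp only [D, fderivWithin_sub_const]

/-- The derivative of `(1 - |ψ|²)u` along a direction in which `∇ψ = (p, q)` is controlled by `(p, q)`
when `|ψ|² ≤ M`. -/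
theorem nonlin_bound {u v p q M : ℝ} (hM : 1 ≤ M) (h : u ^ 2 + v ^ 2 ≤ M) :
    (-(2 * (u * p + v * q)) * u + (1 - (u ^ 2 + v ^ 2)) * p) ^ 2 ≤
      10 * M ^ 2 * (p ^ 2 + q ^ 2) := by
  set a := -(2 * (u * p + v * q)) * u
  set b := (1 - (u ^ 2 + v ^ 2)) * p
  have h0 : 0 ≤ u ^ 2 + v ^ 2 := by positivity
  have e1 : (u * p + v * q) ^ 2 ≤ M * (p ^ 2 + q ^ 2) := by
    have : (u * p + v * q) ^ 2 ≤ (u ^ 2 + v ^ 2) * (p ^ 2 + q ^ 2) := by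
      nlinarith [sq_nonneg (u * q - v * p)]
    exact this.trans (mul_le_mul_of_nonneg_right h (by positivity))
  have hu : u ^ 2 ≤ M := by nlinarith [sq_nonneg v]
  have ha : a ^ 2 ≤ 4 * M ^ 2 * (p ^ 2 + q ^ 2) := by
    have : (u * p + v * q) ^ 2 * u ^ 2 ≤ M * (p ^ 2 + q ^ 2) * M :=
      mul_le_mul e1 hu (sq_nonneg _) (by positivity)
    have e : a ^ 2 = 4 * ((u * p + v * q) ^ 2 * u ^ 2) := by simp only [a]; ring
    rw [e]
    linarith
  have hb : b ^ 2 ≤ M ^ 2 * (p ^ 2 + q ^ 2) := by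
    have h1 : (1 - (u ^ 2 + v ^ 2)) ^ 2 ≤ M ^ 2 := by
      rw [sq_le_sq, abs_of_nonneg (by linarith : 0 ≤ M), abs_le]
      constructor <;> linarith
    have : (1 - (u ^ 2 + v ^ 2)) ^ 2 * p ^ 2 ≤ M ^ 2 * (p ^ 2 + q ^ 2) :=
      mul_le_mul h1 (by nlinarith [sq_nonneg q]) (sq_nonneg _) (by positivity)
    simp only [b, mul_pow]
    exact this
  nlinarith [sq_nonneg (a - b), mul_nonneg (sq_nonneg M) (add_nonneg (sq_nonneg p) (sq_nonneg q))]

theorem D_nonlin {u v : Ed d → ℝ} (su : Sm N u) (sv : Sm N v) {f : Ed d → ℝ} (sf : Sm N f)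
    {x : Ed d} (hx : x ∈ slab d N) (j : Fin d) :
    D N j (fun x => (1 - (u x ^ 2 + v x ^ 2)) * f x) x =
      -(2 * (u x * D N j u x + v x * D N j v x)) * f x +
        (1 - (u x ^ 2 + v x ^ 2)) * D N j f x := by
  rw [D_mul (contDiffOn_const.sub (su.w sv)) sf hx, D_sub contDiffOn_const (su.w sv) hx, D_const,
    D_w su sv hx]
  ring

variable {c : ℝ} {u v : Ed d → ℝ}

theorem Sol.L2_u (hN : 0 < N) (hs : Sol N c u v) : L2 N (fun x => u x - 1) := by
  refine poincare hN (hs.sys.sf.sub contDiffOn_const) (fun x hx => by simp [hs.bu x hx]) ?_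
  rw [D_sub_one]
  exact hs.Iu 0

theorem Sol.L2_v (hN : 0 < N) (hs : Sol N c u v) : L2 N v :=
  poincare hN hs.sys.sg hs.bv (hs.Iv 0)

/-- Second derivatives with at least one tangential direction are square integrable. -/
theorem Sol.second (hN : 0 < N) (hc : 0 < c) (hs : Sol N c u v) {j : Fin d} (hj : j ≠ 0)
    (k : Fin d) : L2 N (D N k (D N j u)) ∧ L2 N (D N k (D N j v)) := by
  have hw := hs.w_le hN hc
  refine caccioppoli hN j hs.sys.sh hs.sys.sl (hs.sys.D hN j) hj
    (fun x hx => D_bdry hN hs.sys.sf hs.bu hj hx) (fun x hx => D_bdry hN hs.sys.sg hs.bv hj hx)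
    (hs.Iu j) (hs.Iv j) ?_ ?_ k
  · refine integrable_of_le (hs.sys.sh.continuousOn.pow 2) (hs.Iw.const_mul (1 + c ^ 2 / 4))
      fun x hx => ?_
    rw [abs_of_nonneg (sq_nonneg _), mul_pow, mul_comm]
    refine mul_le_mul_of_nonneg_right ?_ (sq_nonneg _)
    nlinarith [hw x (slab_sub hx), sq_nonneg (v x)]
  · refine integrable_of_le (hs.sys.sl.continuousOn.pow 2) (hs.Iw.const_mul (1 + c ^ 2 / 4))
      fun x hx => ?_
    rw [abs_of_nonneg (sq_nonneg _), mul_pow, mul_comm]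
    refine mul_le_mul_of_nonneg_right ?_ (sq_nonneg _)
    nlinarith [hw x (slab_sub hx), sq_nonneg (u x)]

/-- Third derivatives with at least two tangential directions are square integrable. -/
theorem Sol.third (hN : 0 < N) (hc : 0 < c) (hs : Sol N c u v) {i j : Fin d} (hi : i ≠ 0)
    (hj : j ≠ 0) (k : Fin d) :
    L2 N (D N k (D N i (D N j u))) ∧ L2 N (D N k (D N i (D N j v))) := by
  have hw := hs.w_le hN hc
  have hM : 1 ≤ 1 + c ^ 2 / 4 := by nlinarith [sq_nonneg c]
  have hij := hs.second hN hc hj i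
  have su := hs.sys.sf
  have sv := hs.sys.sg
  refine caccioppoli hN i (hs.sys.sh.D hN j) (hs.sys.sl.D hN j) ((hs.sys.D hN j).D hN i) hi
    (fun x hx => D_bdry hN (su.D hN j) (fun y hy => D_bdry hN su hs.bu hj hy) hi hx)
    (fun x hx => D_bdry hN (sv.D hN j) (fun y hy => D_bdry hN sv hs.bv hj hy) hi hx)
    hij.1 hij.2 ?_ ?_ k
  · refine integrable_of_le ((hs.sys.sh.D hN j).continuousOn.pow 2)
      (((hs.Iu j).add (hs.Iv j)).const_mul (10 * (1 + c ^ 2 / 4) ^ 2)) fun x hx => ?_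
    rw [abs_of_nonneg (sq_nonneg _), D_nonlin su sv su hx]
    exact nonlin_bound hM (hw x (slab_sub hx))
  · refine integrable_of_le ((hs.sys.sl.D hN j).continuousOn.pow 2)
      (((hs.Iu j).add (hs.Iv j)).const_mul (10 * (1 + c ^ 2 / 4) ^ 2)) fun x hx => ?_
    rw [abs_of_nonneg (sq_nonneg _), D_nonlin su sv sv hx]
    have := nonlin_bound (u := v x) (v := u x) (p := D N j v x) (q := D N j u x) hM
      (by rw [add_comm]; exact hw x (slab_sub hx))
    simp only [Pi.add_apply]
    rw [add_comm (v x ^ 2), add_comm (v x * _), add_comm (D N j v x ^ 2)] at this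
    exact this

/-- In dimensions two and three every mixed derivative of order at most one in each variable is of one
of the kinds controlled by the hypotheses, once `∂₁` has been moved to the outermost place. -/
theorem mix_integrable (hN : 0 < N) (hd : d = 2 ∨ d = 3) {f : Ed d → ℝ} (sf : Sm N f)
    (h0 : L2 N f) (h1 : ∀ i, L2 N (D N i f)) (h2 : ∀ j, j ≠ 0 → ∀ k, L2 N (D N k (D N j f)))
    (h3 : ∀ i, i ≠ 0 → ∀ j, j ≠ 0 → ∀ k, L2 N (D N k (D N i (D N j f)))) :
    IntegrableOn (mixSq N (List.finRange d) f) (slab d N) := by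
  have h2' : ∀ j, j ≠ 0 → L2 N (D N j (D N 0 f)) := fun j hj =>
    (h2 j hj 0).congr fun x hx => D_comm sf hx 0 j
  rcases hd with rfl | rfl
  · have e : List.finRange 2 = [0, 1] := rfl
    rw [e]
    -- `0` is taken with respect to the given `NeZero` instance, so the comparison goes through `ℕ`.
    have n1 : (1 : Fin 2) ≠ 0 := fun h =>
      absurd (congrArg Fin.val h) (show (1 : ℕ) ≠ 0 by decide)
    exact (h0.add (h1 1)).add ((h1 0).add (h2' 1 n1))
  · have e : List.finRange 3 = [0, 1, 2] := rfl
    rw [e]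
    have n1 : (1 : Fin 3) ≠ 0 := fun h =>
      absurd (congrArg Fin.val h) (show (1 : ℕ) ≠ 0 by decide)
    have n2 : (2 : Fin 3) ≠ 0 := fun h =>
      absurd (congrArg Fin.val h) (show (2 : ℕ) ≠ 0 by decide)
    have hthird : L2 N (D N 2 (D N 1 (D N 0 f))) := by
      refine (h3 2 n2 1 n1 0).congr fun x hx => ?_
      rw [D_comm (sf.D hN 1) hx 0 2]
      exact D_congr (fun y hy => D_comm sf hy 0 1) hx 2
    exact ((h0.add (h1 2)).add ((h1 1).add (h2 1 n1 2))).add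
      (((h1 0).add (h2' 2 n2)).add ((h2' 1 n1).add hthird))

/-- Far out in the slab `Re ψ` is close to `1`: the only case needed is `Re ψ > 1/2`. -/
theorem Sol.far (hN : 0 < N) (hd : d = 2 ∨ d = 3) (hc : 0 < c) (hs : Sol N c u v) :
    ∃ R : ℝ, ∀ x ∈ slabCl d N, ∀ j, j ≠ 0 → R ≤ |x j| → 1 / 2 < u x := by
  have su : Sm N (fun x => u x - 1) := hs.sys.sf.sub contDiffOn_const
  have Iu := mix_integrable hN hd su (hs.L2_u hN)
    (fun i => by rw [D_sub_one]; exact hs.Iu i)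
    (fun j hj k => by rw [D_sub_one]; exact (hs.second hN hc hj k).1)
    (fun i hi j hj k => by rw [D_sub_one]; exact (hs.third hN hc hi hj k).1)
  obtain ⟨R, hR⟩ := decay hN su Iu (ε := 1 / 4) (by norm_num)
  refine ⟨R, fun x hx j hj hxj => ?_⟩
  rw [slabCl_eq] at hx
  rcases hx with hx | hx
  · have := hR x hx j hj hxj
    nlinarith
  · rw [hs.bu x hx]; norm_num

/-- A solution without zeros has modulus bounded away from zero. -/
theorem Sol.lower (hN : 0 < N) (hd : d = 2 ∨ d = 3) (hc : 0 < c) (hs : Sol N c u v)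
    (hnz : ∀ x, 0 < u x ^ 2 + v x ^ 2) :
    ∃ δ : ℝ, 0 < δ ∧ ∀ x ∈ slabCl d N, δ ≤ u x ^ 2 + v x ^ 2 := by
  obtain ⟨R, hR⟩ := hs.far hN hd hc
  have hcomp := isCompact_box (d := d) (N := N) R
  have hcont : ContinuousOn (fun x => u x ^ 2 + v x ^ 2)
      {x : Ed d | x ∈ slabCl d N ∧ ∀ j, j ≠ 0 → |x j| ≤ R} :=
    (hs.sys.sf.w hs.sys.sg).continuousOn.mono fun x hx => hx.1
  have key : ∃ δ : ℝ, 0 < δ ∧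
      ∀ x ∈ {x : Ed d | x ∈ slabCl d N ∧ ∀ j, j ≠ 0 → |x j| ≤ R}, δ ≤ u x ^ 2 + v x ^ 2 := by
    rcases Set.eq_empty_or_nonempty {x : Ed d | x ∈ slabCl d N ∧ ∀ j, j ≠ 0 → |x j| ≤ R}
      with h | h
    · exact ⟨1, one_pos, fun x hx => by rw [h] at hx; exact hx.elim⟩
    · obtain ⟨y, -, hm⟩ := hcomp.exists_isMinOn h hcont
      exact ⟨_, hnz y, fun x hx => hm hx⟩
  obtain ⟨δ, hδ, h⟩ := key
  refine ⟨min δ (1 / 4), lt_min hδ (by norm_num), fun x hx => ?_⟩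
  by_cases hb : ∀ j, j ≠ 0 → |x j| ≤ R
  · exact (min_le_left _ _).trans (h x ⟨hx, hb⟩)
  · push Not at hb
    obtain ⟨j, hj, hxj⟩ := hb
    have := hR x hx j hj hxj.le
    refine (min_le_right _ _).trans ?_
    nlinarith [sq_nonneg (v x)]

end regularity

/-! ### The lifting and the three identities -/

/-- Smooth polar coordinates `u + iv = ρ e^{iθ}` on the closed slab. -/
structure Lift {d : ℕ} (N : ℕ) [NeZero d] (u v ρ θ : Ed d → ℝ) : Prop where
  sρ : Sm N ρ
  sθ : Sm N θ
  pos : ∀ x, 0 < ρ x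
  eu : ∀ x ∈ slabCl d N, u x = ρ x * Real.cos (θ x)
  ev : ∀ x ∈ slabCl d N, v x = ρ x * Real.sin (θ x)

section lifting

variable {d N : ℕ} [NeZero d] {c : ℝ} {u v ρ θ : Ed d → ℝ}

theorem Lift.sq (hl : Lift N u v ρ θ) {x : Ed d} (hx : x ∈ slabCl d N) :
    u x ^ 2 + v x ^ 2 = ρ x ^ 2 := by
  rw [hl.eu x hx, hl.ev x hx]
  linear_combination ρ x ^ 2 * Real.sin_sq_add_cos_sq (θ x)

theorem Lift.at_one (hl : Lift N u v ρ θ) {x : Ed d} (hx : x ∈ slabCl d N) (hu : u x = 1)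
    (hv : v x = 0) : Real.cos (θ x) = 1 := by
  have h1 := hl.sq hx
  rw [hu, hv] at h1
  have h2 : ρ x = 1 := by nlinarith [hl.pos x]
  have := hl.eu x hx
  rw [h2, hu] at this
  linarith

/-- The phase does not wind along a connected set on which `Re ψ > 0`. -/
theorem Lift.phase_eq (hl : Lift N u v ρ θ) {S : Set (Ed d)} (hS : IsPreconnected S)
    (hsub : S ⊆ slabCl d N) (hpos : ∀ x ∈ S, 0 < u x) {x y : Ed d} (hx : x ∈ S) (hy : y ∈ S)
    (cx : Real.cos (θ x) = 1) (cy : Real.cos (θ y) = 1) : θ x = θ y := by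
  have himg : IsPreconnected (θ '' S) := hS.image θ (hl.sθ.continuousOn.mono hsub)
  have key : ∀ a ∈ S, ∀ b ∈ S, Real.cos (θ a) = 1 → Real.cos (θ b) = 1 → ¬ θ a < θ b := by
    intro a ha b hb ca cb hlt
    obtain ⟨n, hn⟩ := (Real.cos_eq_one_iff _).1 ca
    obtain ⟨m, hm⟩ := (Real.cos_eq_one_iff _).1 cb
    have hpi := Real.pi_pos
    have hnm : n < m := by
      rw [← hn, ← hm] at hlt
      have := lt_of_mul_lt_mul_right hlt (by positivity)
      exact_mod_cast this
    have hnm' : (n : ℝ) + 1 ≤ m := by exact_mod_cast hnm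
    -- Between two distinct multiples of `2π` the phase takes an odd multiple of `π`, where `Re ψ < 0`.
    have hmem : (n : ℝ) * (2 * Real.pi) + Real.pi ∈ θ '' S := by
      refine himg.ordConnected.out ⟨a, ha, rfl⟩ ⟨b, hb, rfl⟩ ⟨by linarith, ?_⟩
      rw [← hm]
      nlinarith
    obtain ⟨z, hz, hzz⟩ := hmem
    have h1 := hpos z hz
    rw [hl.eu z (hsub hz), hzz, Real.cos_add_pi, Real.cos_int_mul_two_pi] at h1
    linarith [hl.pos z]
  exact le_antisymm (not_lt.1 (key y hy x hx cy cx)) (not_lt.1 (key x hx y hy cx cy))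

/-- The phase is constant on the whole boundary: it is constant on each of the two boundary
components, and these are joined by a region far away where `Re ψ > 0`. -/
theorem Lift.phase_bdry (hN : 0 < N) (hd : d = 2 ∨ d = 3) (hc : 0 < c) (hs : Sol N c u v)
    (hl : Lift N u v ρ θ) : ∃ a : ℝ, ∀ x ∈ slabBdry d N, θ x = a := by
  obtain ⟨R, hR⟩ := hs.far hN hd hc
  obtain ⟨j, hj⟩ : ∃ j : Fin d, j ≠ 0 := by
    rcases hd with rfl | rfl
    · exact ⟨1, fun h => absurd (congrArg Fin.val h) (show (1 : ℕ) ≠ 0 by decide)⟩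
    · exact ⟨1, fun h => absurd (congrArg Fin.val h) (show (1 : ℕ) ≠ 0 by decide)⟩
  have hN' : (0 : ℝ) < N := by exact_mod_cast hN
  have hcos : ∀ x ∈ slabBdry d N, Real.cos (θ x) = 1 := fun x hx =>
    hl.at_one (bdry_sub hx) (hs.bu x hx) (hs.bv x hx)
  have hlin : ∀ i : Fin d, IsLinearMap ℝ (fun x : Ed d => x i) := fun i =>
    ⟨fun _ _ => rfl, fun _ _ => rfl⟩
  have plane : ∀ b : ℝ, (∀ x : Ed d, x 0 = b → x ∈ slabBdry d N) → ∀ x y : Ed d, x 0 = b →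
      y 0 = b → θ x = θ y := by
    intro b hb x y hx hy
    refine hl.phase_eq (S := {z | z 0 = b}) (convex_hyperplane (hlin 0) b).isPreconnected
      (fun z hz => bdry_sub (hb z hz)) (fun z hz => ?_) hx hy (hcos x (hb x hx)) (hcos y (hb y hy))
    rw [hs.bu z (hb z hz)]
    exact one_pos
  have hl' : ∀ x : Ed d, x 0 = -(N : ℝ) → x ∈ slabBdry d N := fun x hx => Or.inl hx
  have hr' : ∀ x : Ed d, x 0 = (N : ℝ) → x ∈ slabBdry d N := fun x hx => Or.inr hx
  set p : ℝ → Ed d := fun b => EuclideanSpace.single 0 b + EuclideanSpace.single j R with hp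
  have p0 : ∀ b, p b 0 = b := fun b => by simp [hp, hj.symm]
  have pj : ∀ b, p b j = R := fun b => by simp [hp, hj]
  have far : θ (p (-N)) = θ (p N) := by
    refine hl.phase_eq (S := slabCl d N ∩ {z | R ≤ z j})
      (convex_slabCl.inter (convex_halfSpace_ge (hlin j) R)).isPreconnected
      Set.inter_subset_left (fun z hz => ?_)
      ⟨bdry_sub (hl' _ (p0 _)), (pj _).ge⟩ ⟨bdry_sub (hr' _ (p0 _)), (pj _).ge⟩
      (hcos _ (hl' _ (p0 _))) (hcos _ (hr' _ (p0 _)))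
    have := hR z hz.1 j hj (le_trans hz.2 (le_abs_self _))
    linarith
  refine ⟨θ (p (-N)), fun x hx => ?_⟩
  rcases hx with hx | hx
  · exact plane _ hl' _ _ hx (p0 _)
  · rw [far]
    exact plane _ hr' _ _ hx (p0 _)

theorem Lift.Du (hl : Lift N u v ρ θ) {x : Ed d} (hx : x ∈ slab d N) (i : Fin d) :
    D N i u x = D N i ρ x * Real.cos (θ x) - ρ x * Real.sin (θ x) * D N i θ x := by
  rw [D_congr (fun y hy => hl.eu y (slab_sub hy)) hx,
    D_mul hl.sρ (g := fun y => Real.cos (θ y)) (Real.contDiff_cos.comp_contDiffOn hl.sθ) hx,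
    D_comp hl.sθ Real.contDiff_cos hx, Real.deriv_cos]
  ring

theorem Lift.Dv (hl : Lift N u v ρ θ) {x : Ed d} (hx : x ∈ slab d N) (i : Fin d) :
    D N i v x = D N i ρ x * Real.sin (θ x) + ρ x * Real.cos (θ x) * D N i θ x := by
  rw [D_congr (fun y hy => hl.ev y (slab_sub hy)) hx,
    D_mul hl.sρ (g := fun y => Real.sin (θ y)) (Real.contDiff_sin.comp_contDiffOn hl.sθ) hx,
    D_comp hl.sθ Real.contDiff_sin hx, Real.deriv_sin]
  ring

theorem Lift.rot (hl : Lift N u v ρ θ) {x : Ed d} (hx : x ∈ slab d N) (i : Fin d) :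
    u x * D N i v x - v x * D N i u x = ρ x ^ 2 * D N i θ x := by
  rw [hl.Du hx, hl.Dv hx, hl.eu x (slab_sub hx), hl.ev x (slab_sub hx)]
  linear_combination ρ x ^ 2 * D N i θ x * Real.sin_sq_add_cos_sq (θ x)

theorem Lift.rad (hl : Lift N u v ρ θ) {x : Ed d} (hx : x ∈ slab d N) (i : Fin d) :
    u x * D N i u x + v x * D N i v x = ρ x * D N i ρ x := by
  rw [hl.Du hx, hl.Dv hx, hl.eu x (slab_sub hx), hl.ev x (slab_sub hx)]
  linear_combination ρ x * D N i ρ x * Real.sin_sq_add_cos_sq (θ x)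

theorem Lift.grad (hl : Lift N u v ρ θ) {x : Ed d} (hx : x ∈ slab d N) (i : Fin d) :
    D N i u x ^ 2 + D N i v x ^ 2 = D N i ρ x ^ 2 + ρ x ^ 2 * D N i θ x ^ 2 := by
  rw [hl.Du hx, hl.Dv hx]
  linear_combination (D N i ρ x ^ 2 + ρ x ^ 2 * D N i θ x ^ 2) * Real.sin_sq_add_cos_sq (θ x)

theorem L2.mul {f g : Ed d → ℝ} (hf : L2 N f) (hg : L2 N g) (cf : ContinuousOn f (slabCl d N))
    (cg : ContinuousOn g (slabCl d N)) : IntegrableOn (fun x => f x * g x) (slab d N) := by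
  refine integrable_of_le (cf.mul cg) (IntegrableOn.add hf hg) fun x _ => ?_
  simp only [Pi.add_apply]
  rw [abs_le]
  constructor <;> nlinarith [sq_nonneg (f x + g x), sq_nonneg (f x - g x)]

theorem bdd_mul_integrable {b g : Ed d → ℝ} {K : ℝ} (cb : ContinuousOn b (slabCl d N))
    (hb : ∀ x ∈ slab d N, |b x| ≤ K) (cg : ContinuousOn g (slabCl d N))
    (hg : IntegrableOn g (slab d N)) : IntegrableOn (fun x => b x * g x) (slab d N) := by
  refine integrable_of_le (cb.mul cg) (Integrable.const_mul hg.abs K) fun x hx => ?_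
  rw [abs_mul]
  exact mul_le_mul_of_nonneg_right (hb x hx) (abs_nonneg _)

/-- The data needed for the integrations by parts: bounds on the modulus and square
integrability of the gradients of modulus and phase, and of the phase relative to its boundary
value `a`. -/
structure Lift.Good (N : ℕ) (ρ θ : Ed d → ℝ) (M a : ℝ) : Prop where
  one_le : 1 ≤ M
  up : ∀ x ∈ slabCl d N, ρ x ^ 2 ≤ M
  bdry : ∀ x ∈ slabBdry d N, θ x = a
  Iθ : ∀ i, L2 N (D N i θ)
  Iρ : ∀ i, L2 N (D N i ρ)
  It : L2 N (fun x => θ x - a)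
  Iw : L2 N (fun x => 1 - ρ x ^ 2)

theorem D_sub_const (f : Ed d → ℝ) (a : ℝ) (i : Fin d) : D N i (fun x => f x - a) = D N i f := by
  funext x
  simp only [D, fderivWithin_sub_const]

/-- The lower bound on `ρ` turns the finite energy into square integrability of `∇θ`, and Poincaré's
inequality then applies to `θ - a`. -/
theorem Lift.good (hN : 0 < N) (hd : d = 2 ∨ d = 3) (hc : 0 < c) (hs : Sol N c u v)
    (hl : Lift N u v ρ θ) (hnz : ∀ x, 0 < u x ^ 2 + v x ^ 2) :
    ∃ M a, Lift.Good N ρ θ M a := by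
  obtain ⟨a, ha⟩ := hl.phase_bdry hN hd hc hs
  obtain ⟨δ, hδ, hlow⟩ := hs.lower hN hd hc hnz
  have Iθ : ∀ i, L2 N (D N i θ) := by
    intro i
    refine integrable_of_le ((hl.sθ.D hN i).continuousOn.pow 2)
      (((hs.Iu i).add (hs.Iv i)).const_mul δ⁻¹) fun x hx => ?_
    have h1 := hlow x (slab_sub hx)
    rw [hl.sq (slab_sub hx)] at h1
    have h2 := hl.grad hx i
    simp only [Pi.add_apply]
    rw [abs_of_nonneg (sq_nonneg _), h2, le_inv_mul_iff₀ hδ]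
    nlinarith [sq_nonneg (D N i ρ x), mul_le_mul_of_nonneg_right h1 (sq_nonneg (D N i θ x))]
  refine ⟨1 + c ^ 2 / 4, a, by nlinarith [sq_nonneg c], fun x hx => ?_, ha, Iθ, fun i => ?_,
    ?_, hs.Iw.congr fun x hx => by rw [hl.sq (slab_sub hx)]⟩
  · rw [← hl.sq hx]
    exact hs.w_le hN hc x hx
  · refine integrable_of_le ((hl.sρ.D hN i).continuousOn.pow 2)
      ((hs.Iu i).add (hs.Iv i)) fun x hx => ?_
    simp only [Pi.add_apply]
    rw [abs_of_nonneg (sq_nonneg _), hl.grad hx i]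
    nlinarith [mul_nonneg (sq_nonneg (ρ x)) (sq_nonneg (D N i θ x))]
  · refine poincare hN (hl.sθ.sub contDiffOn_const) (fun x hx => by simp [ha x hx]) ?_
    rw [D_sub_const]
    exact Iθ 0

/-- First identity: integrate `∂₁(θ - a - 2v + uv)`. -/
theorem Lift.first (hN : 0 < N) (hs : Sol N c u v) (hl : Lift N u v ρ θ) {M a : ℝ}
    (hg : Lift.Good N ρ θ M a) :
    -∫ x in slab d N, D N 0 v x * (u x - 1) =
      1 / 2 * ∫ x in slab d N, (1 - ρ x ^ 2) * D N 0 θ x := by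
  have su := hs.sys.sf
  have sv := hs.sys.sg
  have st : Sm N (fun x => θ x - a) := hl.sθ.sub contDiffOn_const
  set E : Ed d → ℝ := fun x => (θ x - a) - 2 * v x + u x * v x with hE
  have s2v : Sm N (fun x => 2 * v x) := contDiffOn_const.mul sv
  have sE : Sm N E := (st.sub s2v).add (su.mul sv)
  have hdiv : ∀ x ∈ slab d N, ∑ i, D N i (fun y => if i = 0 then E y else 0) x =
      (1 - ρ x ^ 2) * D N 0 θ x + 2 * (D N 0 v x * (u x - 1)) := by
    intro x hx
    rw [sum_D_single, D_add (st.sub s2v) (su.mul sv) hx, D_sub st s2v hx, D_sub_const,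
      D_mul contDiffOn_const sv hx, D_const, D_mul su sv hx]
    linear_combination -hl.rot hx 0
  have i1 : IntegrableOn (fun x => (1 - ρ x ^ 2) * D N 0 θ x) (slab d N) :=
    hg.Iw.mul (hg.Iθ 0) (continuousOn_const.sub (hl.sρ.continuousOn.pow 2))
      (hl.sθ.D hN 0).continuousOn
  have i2 : IntegrableOn (fun x => D N 0 v x * (u x - 1)) (slab d N) :=
    L2.mul (hs.Iv 0) (hs.L2_u hN) (sv.D hN 0).continuousOn
      (su.continuousOn.sub continuousOn_const)
  have hi : IntegrableOn (fun x => (1 - ρ x ^ 2) * D N 0 θ x + 2 * (D N 0 v x * (u x - 1)))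
      (slab d N) := i1.add (i2.const_mul 2)
  have h0 := ibp_int hN (F := fun i y => if i = 0 then E y else 0) (fun i => sm_single sE i 0)
    (fun x hx => by simp [hE, hg.bdry x hx, hs.bv x hx])
    (fun i hi => by simp [hi]) (hi.congr_fun (fun x hx => (hdiv x hx).symm) measurable_slab)
  rw [setIntegral_congr_fun measurable_slab hdiv, integral_add i1 (i2.const_mul 2),
    integral_const_mul] at h0
  linarith

/-- Second identity: the current `u∇v - v∇u` is divergence free up to the drift term; test with
`θ - a`. -/
theorem Lift.second (hN : 0 < N) (hs : Sol N c u v) (hl : Lift N u v ρ θ) {M a : ℝ}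
    (hg : Lift.Good N ρ θ M a) :
    ∫ x in slab d N, ρ x ^ 2 * ∑ i, D N i θ x ^ 2 =
      c / 2 * ∫ x in slab d N, (1 - ρ x ^ 2) * D N 0 θ x := by
  have su := hs.sys.sf
  have sv := hs.sys.sg
  set t : Ed d → ℝ := fun x => θ x - a with ht
  have st : Sm N t := hl.sθ.sub contDiffOn_const
  have Dt : ∀ i, D N i t = D N i θ := fun i => D_sub_const θ a i
  set W : Fin d → Ed d → ℝ := fun i x => u x * D N i v x - v x * D N i u x with hW
  have sW : ∀ i, Sm N (W i) := fun i => (su.mul (sv.D hN i)).sub (sv.mul (su.D hN i))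
  set Z : Ed d → ℝ := fun x => c / 2 * (u x ^ 2 + v x ^ 2 - 1) with hZ
  have sZ : Sm N Z := contDiffOn_const.mul ((su.w sv).sub contDiffOn_const)
  set F : Fin d → Ed d → ℝ := fun i x => t x * W i x + if i = 0 then t x * Z x else 0 with hF
  have sF : ∀ i, Sm N (F i) := fun i => (st.mul (sW i)).add (sm_single (st.mul sZ) i 0)
  have hdiv : ∀ x ∈ slab d N, ∑ i, D N i (F i) x =
      ρ x ^ 2 * ∑ i, D N i θ x ^ 2 - c / 2 * ((1 - ρ x ^ 2) * D N 0 θ x) := by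
    intro x hx
    have e1 : ∀ i, D N i (F i) x = ρ x ^ 2 * D N i θ x ^ 2 +
        t x * (u x * D N i (D N i v) x - v x * D N i (D N i u) x) +
        D N i (fun x => if i = 0 then t x * Z x else 0) x := by
      intro i
      have e2 : D N i (W i) x = u x * D N i (D N i v) x - v x * D N i (D N i u) x := by
        rw [D_sub (su.mul (sv.D hN i)) (sv.mul (su.D hN i)) hx, D_mul su (sv.D hN i) hx,
          D_mul sv (su.D hN i) hx]
        ring
      rw [D_add (st.mul (sW i)) (sm_single (st.mul sZ) i 0) hx, D_mul st (sW i) hx, Dt, e2]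
      linear_combination D N i θ x * hl.rot hx i
    have e3 : ∑ i, (u x * D N i (D N i v) x - v x * D N i (D N i u) x) =
        u x * ∑ i, D N i (D N i v) x - v x * ∑ i, D N i (D N i u) x := by
      rw [Finset.sum_sub_distrib, Finset.mul_sum, Finset.mul_sum]
    have e4 : D N 0 Z x = c / 2 * (2 * (u x * D N 0 u x + v x * D N 0 v x)) := by
      rw [D_mul contDiffOn_const ((su.w sv).sub contDiffOn_const) hx, D_const, D_sub_const,
        D_w su sv hx]
      ring
    rw [Finset.sum_congr rfl fun i _ => e1 i, Finset.sum_add_distrib, Finset.sum_add_distrib,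
      sum_D_single, ← Finset.mul_sum, ← Finset.mul_sum, e3, hs.sys.ef x hx, hs.sys.eg x hx,
      D_mul st sZ hx, Dt, e4]
    simp only [hZ, hl.sq (slab_sub hx)]
    ring
  have F0 : ∀ x ∈ slabBdry d N, F 0 x = 0 := fun x hx => by simp [hF, ht, hg.bdry x hx]
  have hint : ∀ i, i ≠ 0 → IntegrableOn (F i) (slab d N) := by
    intro i hi
    refine integrable_of_le (sF i).continuousOn
      ((IntegrableOn.add hg.It (hg.Iθ i)).const_mul M) fun x hx => ?_
    have h1 := hg.up x (slab_sub hx)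
    simp only [hF, hi, if_false, add_zero, hW, hl.rot hx i, Pi.add_apply]
    have h2 : |t x * D N i θ x| ≤ t x ^ 2 + D N i θ x ^ 2 := by
      rw [abs_le]
      constructor <;> nlinarith [sq_nonneg (t x + D N i θ x), sq_nonneg (t x - D N i θ x)]
    have h3 : |t x * (ρ x ^ 2 * D N i θ x)| = ρ x ^ 2 * |t x * D N i θ x| := by
      rw [show t x * (ρ x ^ 2 * D N i θ x) = ρ x ^ 2 * (t x * D N i θ x) by ring, abs_mul,
        abs_of_nonneg (sq_nonneg _)]
    rw [h3]
    exact mul_le_mul h1 h2 (abs_nonneg _) (by linarith [hg.one_le])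
  have cΘ : ContinuousOn (fun x => ∑ i, D N i θ x ^ 2) (slabCl d N) :=
    continuousOn_finsetSum _ fun i _ => (hl.sθ.D hN i).continuousOn.pow 2
  have i1 : IntegrableOn (fun x => ρ x ^ 2 * ∑ i, D N i θ x ^ 2) (slab d N) :=
    bdd_mul_integrable (K := M) (hl.sρ.continuousOn.pow 2)
      (fun x hx => by rw [abs_of_nonneg (sq_nonneg _)]; exact hg.up x (slab_sub hx)) cΘ
      (integrable_finsetSum _ fun i _ => hg.Iθ i)
  have i2 : IntegrableOn (fun x => (1 - ρ x ^ 2) * D N 0 θ x) (slab d N) :=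
    hg.Iw.mul (hg.Iθ 0) (continuousOn_const.sub (hl.sρ.continuousOn.pow 2))
      (hl.sθ.D hN 0).continuousOn
  have hi : IntegrableOn (fun x => ρ x ^ 2 * ∑ i, D N i θ x ^ 2 -
      c / 2 * ((1 - ρ x ^ 2) * D N 0 θ x)) (slab d N) := i1.sub (i2.const_mul _)
  have h0 := ibp_int hN sF F0 hint (hi.congr_fun (fun x hx => (hdiv x hx).symm) measurable_slab)
  rw [setIntegral_congr_fun measurable_slab hdiv, integral_sub i1 (i2.const_mul _),
    integral_const_mul] at h0
  linarith

/-- The equation of the modulus: `Δρ = ρ|∇θ|² + cρ ∂₁θ - ρ(1 - ρ²)`. -/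
theorem Lift.lap_ρ (hN : 0 < N) (hs : Sol N c u v) (hl : Lift N u v ρ θ) {x : Ed d}
    (hx : x ∈ slab d N) : ∑ i, D N i (D N i ρ) x =
      ρ x * ∑ i, D N i θ x ^ 2 + c * ρ x * D N 0 θ x - ρ x * (1 - ρ x ^ 2) := by
  have h1 := hs.div_V hN hx
  have e1 : ∀ i, D N i (fun y => u y * D N i u y + v y * D N i v y) x =
      D N i ρ x ^ 2 + ρ x * D N i (D N i ρ) x := by
    intro i
    rw [D_congr (fun y hy => hl.rad hy i) hx, D_mul hl.sρ (hl.sρ.D hN i) hx]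
    ring
  rw [Finset.sum_congr rfl fun i _ => e1 i, Finset.sum_congr rfl fun i _ => hl.grad hx i,
    Finset.sum_add_distrib, Finset.sum_add_distrib, ← Finset.mul_sum, ← Finset.mul_sum,
    hl.rot hx 0, hl.sq (slab_sub hx)] at h1
  apply mul_left_cancel₀ (hl.pos x).ne'
  linear_combination h1

/-- Third identity: test the equation of the modulus with `1 - ρ²`. -/
theorem Lift.third (hN : 0 < N) (hs : Sol N c u v) (hl : Lift N u v ρ θ) {M a : ℝ}
    (hg : Lift.Good N ρ θ M a) :
    ∫ x in slab d N, (2 * ρ x * ∑ i, D N i ρ x ^ 2 + ρ x * (1 - ρ x ^ 2) ^ 2) =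
      c * (∫ x in slab d N, ρ x * (1 - ρ x ^ 2) * D N 0 θ x) +
        ∫ x in slab d N, ρ x * (1 - ρ x ^ 2) * ∑ i, D N i θ x ^ 2 := by
  have sr := hl.sρ
  have cr := sr.continuousOn
  have sq : Sm N (fun x => 1 - ρ x ^ 2) := contDiffOn_const.sub (sr.pow 2)
  have Dq : ∀ x ∈ slab d N, ∀ i, D N i (fun x => 1 - ρ x ^ 2) x = -(2 * ρ x * D N i ρ x) := by
    intro x hx i
    have : (fun x => 1 - ρ x ^ 2) = fun x => 1 - ρ x * ρ x := by funext; ring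
    rw [this, D_sub contDiffOn_const (sr.mul sr) hx, D_const, D_mul sr sr hx]
    ring
  set F : Fin d → Ed d → ℝ := fun i x => (1 - ρ x ^ 2) * D N i ρ x with hF
  have sF : ∀ i, Sm N (F i) := fun i => sq.mul (sr.D hN i)
  have F0 : ∀ x ∈ slabBdry d N, F 0 x = 0 := by
    intro x hx
    have := hl.sq (bdry_sub hx)
    rw [hs.bu x hx, hs.bv x hx] at this
    simp [hF, ← this]
  have hdiv : ∀ x ∈ slab d N, ∑ i, D N i (F i) x =
      c * (ρ x * (1 - ρ x ^ 2) * D N 0 θ x) + ρ x * (1 - ρ x ^ 2) * ∑ i, D N i θ x ^ 2 -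
        (2 * ρ x * ∑ i, D N i ρ x ^ 2 + ρ x * (1 - ρ x ^ 2) ^ 2) := by
    intro x hx
    have e1 : ∀ i, D N i (F i) x =
        -(2 * ρ x) * D N i ρ x ^ 2 + (1 - ρ x ^ 2) * D N i (D N i ρ) x := by
      intro i
      rw [D_mul sq (sr.D hN i) hx, Dq x hx]
      ring
    rw [Finset.sum_congr rfl fun i _ => e1 i, Finset.sum_add_distrib, ← Finset.mul_sum,
      ← Finset.mul_sum, hl.lap_ρ hN hs hx]
    ring
  have b1 : ∀ x ∈ slab d N, |ρ x| ≤ M := by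
    intro x hx
    rw [abs_of_pos (hl.pos x)]
    nlinarith [hg.up x (slab_sub hx), hg.one_le, hl.pos x]
  have b2 : ∀ x ∈ slab d N, |1 - ρ x ^ 2| ≤ M := by
    intro x hx
    rw [abs_le]
    constructor <;> nlinarith [hg.up x (slab_sub hx), hg.one_le, sq_nonneg (ρ x)]
  have b3 : ∀ x ∈ slab d N, |ρ x * (1 - ρ x ^ 2)| ≤ M * M := by
    intro x hx
    rw [abs_mul]
    exact mul_le_mul (b1 x hx) (b2 x hx) (abs_nonneg _) (by linarith [hg.one_le])
  have cq := sq.continuousOn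
  have cS : ∀ {f : Ed d → ℝ}, Sm N f → ContinuousOn (fun x => ∑ i, D N i f x ^ 2) (slabCl d N) :=
    fun hf => continuousOn_finsetSum _ fun i _ => (hf.D hN i).continuousOn.pow 2
  have i1 : IntegrableOn (fun x => ρ x * (1 - ρ x ^ 2) * D N 0 θ x) (slab d N) := by
    have : IntegrableOn (fun x => ρ x * ((1 - ρ x ^ 2) * D N 0 θ x)) (slab d N) :=
      bdd_mul_integrable cr b1 (cq.mul (hl.sθ.D hN 0).continuousOn)
      (hg.Iw.mul (hg.Iθ 0) cq (hl.sθ.D hN 0).continuousOn)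
    simpa only [mul_assoc] using this
  have i2 : IntegrableOn (fun x => ρ x * (1 - ρ x ^ 2) * ∑ i, D N i θ x ^ 2) (slab d N) :=
    bdd_mul_integrable (cr.mul cq) b3 (cS hl.sθ) (integrable_finsetSum _ fun i _ => hg.Iθ i)
  have i3 : IntegrableOn (fun x => 2 * ρ x * ∑ i, D N i ρ x ^ 2) (slab d N) := by
    have : IntegrableOn (fun x => 2 * (ρ x * ∑ i, D N i ρ x ^ 2)) (slab d N) :=
      (bdd_mul_integrable cr b1 (cS sr)
        (integrable_finsetSum _ fun i _ => hg.Iρ i)).const_mul 2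
    simpa only [mul_assoc] using this
  have i4 : IntegrableOn (fun x => ρ x * (1 - ρ x ^ 2) ^ 2) (slab d N) :=
    bdd_mul_integrable cr b1 (cq.pow 2) hg.Iw
  have i12 : IntegrableOn (fun x => c * (ρ x * (1 - ρ x ^ 2) * D N 0 θ x) +
      ρ x * (1 - ρ x ^ 2) * ∑ i, D N i θ x ^ 2) (slab d N) := (i1.const_mul c).add i2
  have i34 : IntegrableOn (fun x => 2 * ρ x * ∑ i, D N i ρ x ^ 2 + ρ x * (1 - ρ x ^ 2) ^ 2)
      (slab d N) := i3.add i4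
  have h0 := ibp_int hN sF F0
    (fun i _ => hg.Iw.mul (hg.Iρ i) cq (sr.D hN i).continuousOn)
    ((i12.sub i34).congr_fun (fun x hx => (hdiv x hx).symm) measurable_slab)
  rw [setIntegral_congr_fun measurable_slab hdiv, integral_sub i12 i34,
    integral_add (i1.const_mul c) i2, integral_const_mul] at h0
  linarith

end lifting

/-! ### From `ψ` to its real and imaginary parts -/

section complex

variable {d N : ℕ} [NeZero d]

theorem D_re {g : Ed d → ℂ} {x : Ed d} (hg : DifferentiableAt ℝ g x) (hx : x ∈ slab d N)
    (i : Fin d) : D N i (fun y => (g y).re) x = (fderiv ℝ g x (eV i)).re := by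
  rw [D_eq_fderiv _ hx, show (fun y => (g y).re) = Complex.reCLM ∘ g from rfl,
    (Complex.reCLM.hasFDerivAt.comp x hg.hasFDerivAt).fderiv]
  rfl

theorem D_im {g : Ed d → ℂ} {x : Ed d} (hg : DifferentiableAt ℝ g x) (hx : x ∈ slab d N)
    (i : Fin d) : D N i (fun y => (g y).im) x = (fderiv ℝ g x (eV i)).im := by
  rw [D_eq_fderiv _ hx, show (fun y => (g y).im) = Complex.imCLM ∘ g from rfl,
    (Complex.imCLM.hasFDerivAt.comp x hg.hasFDerivAt).fderiv]
  rfl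

theorem pd_diff {ψ : Ed d → ℂ} (h : ContDiffOn ℝ (⊤ : ℕ∞) ψ (slabCl d N)) {x : Ed d}
    (hx : x ∈ slab d N) (i : Fin d) : DifferentiableAt ℝ (pd ψ i) x := by
  have h1 : ContDiffAt ℝ (⊤ : ℕ∞) ψ x := h.contDiffAt (slab_nhds hx)
  have h2 : ContDiffAt ℝ 1 (fderiv ℝ ψ) x :=
    h1.fderiv_right (m := 1) (WithTop.coe_le_coe.2 (le_top : (1 : ℕ∞) + 1 ≤ ⊤))
  exact (h2.differentiableAt one_ne_zero).clm_apply (differentiableAt_const _)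

theorem norm_sq_re_im (z : ℂ) : ‖z‖ ^ 2 = z.re ^ 2 + z.im ^ 2 := by
  rw [Complex.sq_norm, Complex.normSq_apply]
  ring

/-- Real and imaginary parts of a finite energy solution solve the real system. -/
theorem SlabSolution.sol (hN : 0 < N) {c : ℝ} {ψ : Ed d → ℂ} (h : SlabSolution d N c ψ) :
    Sol N c (fun x => (ψ x).re) (fun x => (ψ x).im) := by
  obtain ⟨hψ, heq, hb, hE⟩ := h
  have su : Sm N (fun x => (ψ x).re) := Complex.reCLM.contDiff.comp_contDiffOn hψ
  have sv : Sm N (fun x => (ψ x).im) := Complex.imCLM.contDiff.comp_contDiffOn hψ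
  have dψ : ∀ x ∈ slab d N, DifferentiableAt ℝ ψ x := fun x hx =>
    (hψ.contDiffAt (slab_nhds hx)).differentiableAt (by simp)
  have Du : ∀ x ∈ slab d N, ∀ i, D N i (fun x => (ψ x).re) x = (pd ψ i x).re :=
    fun x hx i => D_re (dψ x hx) hx i
  have Dv : ∀ x ∈ slab d N, ∀ i, D N i (fun x => (ψ x).im) x = (pd ψ i x).im :=
    fun x hx i => D_im (dψ x hx) hx i
  have Lu : ∀ x ∈ slab d N, ∑ i, D N i (D N i (fun x => (ψ x).re)) x = (lap ψ x).re := by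
    intro x hx
    rw [lap, Complex.re_sum]
    refine Finset.sum_congr rfl fun i _ => ?_
    rw [D_congr (fun y hy => Du y hy i) hx]
    exact D_re (pd_diff hψ hx i) hx i
  have Lv : ∀ x ∈ slab d N, ∑ i, D N i (D N i (fun x => (ψ x).im)) x = (lap ψ x).im := by
    intro x hx
    rw [lap, Complex.im_sum]
    refine Finset.sum_congr rfl fun i _ => ?_
    rw [D_congr (fun y hy => Dv y hy i) hx]
    exact D_im (pd_diff hψ hx i) hx i
  have heq' : ∀ x ∈ slab d N, Complex.I * (c : ℂ) * pd ψ 0 x + lap ψ x +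
      ((1 - ((ψ x).re ^ 2 + (ψ x).im ^ 2) : ℝ) : ℂ) * ψ x = 0 := by
    intro x hx
    rw [← heq x hx, ← norm_sq_re_im]
    push_cast
    ring
  have sw : Sm N (fun x => 1 - ((ψ x).re ^ 2 + (ψ x).im ^ 2)) := contDiffOn_const.sub (su.w sv)
  have hden : ∀ x ∈ slab d N, ∀ i, D N i (fun x => (ψ x).re) x ^ 2 +
      D N i (fun x => (ψ x).im) x ^ 2 ≤ 2 * eDen ψ x := by
    intro x hx i
    rw [Du x hx, Dv x hx, ← norm_sq_re_im]
    have : ‖pd ψ i x‖ ^ 2 ≤ gradSq ψ x :=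
      Finset.single_le_sum (f := fun i => ‖pd ψ i x‖ ^ 2) (fun i _ => by positivity)
        (Finset.mem_univ i)
    rw [eDen]
    nlinarith [sq_nonneg (1 - ‖ψ x‖ ^ 2)]
  refine ⟨⟨su, sv, sw.mul su, sw.mul sv, fun x hx => ?_, fun x hx => ?_⟩,
    fun x hx => by simp [hb x hx], fun x hx => by simp [hb x hx], fun i => ?_, fun i => ?_, ?_⟩
  · have := congrArg Complex.re (heq' x hx)
    simp only [Complex.add_re, Complex.mul_re, Complex.mul_im, Complex.I_re, Complex.I_im,
      Complex.ofReal_re, Complex.ofReal_im, Complex.zero_re] at this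
    rw [Lu x hx, Dv x hx]
    linear_combination this
  · have := congrArg Complex.im (heq' x hx)
    simp only [Complex.add_im, Complex.mul_re, Complex.mul_im, Complex.I_re, Complex.I_im,
      Complex.ofReal_re, Complex.ofReal_im, Complex.zero_im] at this
    rw [Lv x hx, Du x hx]
    linear_combination this
  · refine integrable_of_le ((su.D hN i).continuousOn.pow 2) (Integrable.const_mul hE 2)
      fun x hx => ?_
    rw [abs_of_nonneg (sq_nonneg _)]
    nlinarith [hden x hx i, sq_nonneg (D N i (fun x => (ψ x).im) x)]
  · refine integrable_of_le ((sv.D hN i).continuousOn.pow 2) (Integrable.const_mul hE 2)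
      fun x hx => ?_
    rw [abs_of_nonneg (sq_nonneg _)]
    nlinarith [hden x hx i, sq_nonneg (D N i (fun x => (ψ x).re) x)]
  · refine integrable_of_le (sw.continuousOn.pow 2) (Integrable.const_mul hE 4)
      fun x hx => ?_
    have h0 : 0 ≤ gradSq ψ x := Finset.sum_nonneg fun i _ => by positivity
    rw [abs_of_nonneg (sq_nonneg _), eDen, norm_sq_re_im]
    linarith

/-- The lifting in real form; `ρ` is smooth up to the boundary because `ψ` has no zeros. -/
theorem lift_of {ψ : Ed d → ℂ} (hψ : ContDiffOn ℝ (⊤ : ℕ∞) ψ (slabCl d N))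
    (hvort : ∀ x, ψ x ≠ 0) {ρ θ : Ed d → ℝ} (hρ : ∀ x, ρ x = ‖ψ x‖)
    (hθ : ContDiffOn ℝ (⊤ : ℕ∞) θ (slabCl d N))
    (hlift : ∀ x ∈ slabCl d N, ψ x = (ρ x : ℂ) * Complex.exp (Complex.I * (θ x : ℂ))) :
    Lift N (fun x => (ψ x).re) (fun x => (ψ x).im) ρ θ := by
  have su : Sm N (fun x => (ψ x).re) := Complex.reCLM.contDiff.comp_contDiffOn hψ
  have sv : Sm N (fun x => (ψ x).im) := Complex.imCLM.contDiff.comp_contDiffOn hψ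
  have e : ρ = fun x => Real.sqrt ((ψ x).re ^ 2 + (ψ x).im ^ 2) := by
    funext x
    rw [hρ, ← norm_sq_re_im, Real.sqrt_sq (norm_nonneg _)]
  refine ⟨?_, hθ, fun x => by rw [hρ]; exact norm_pos_iff.2 (hvort x), fun x hx => ?_,
    fun x hx => ?_⟩
  · rw [e]
    refine ContDiffOn.sqrt (su.w sv) fun x _ => ?_
    rw [← norm_sq_re_im]
    exact pow_ne_zero _ (norm_ne_zero_iff.2 (hvort x))
  · rw [hlift x hx, mul_comm Complex.I, Complex.re_ofReal_mul, Complex.exp_ofReal_mul_I_re]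
  · rw [hlift x hx, mul_comm Complex.I, Complex.im_ofReal_mul, Complex.exp_ofReal_mul_I_im]

end complex

/-- the three integral identities for vortexless finite energy solutions
of the slab problem, written in terms of a lifting `ψ = ρ e^{iθ}`. -/
theorem statement10 (d N : ℕ) [NeZero d] (hd : d = 2 ∨ d = 3) (c : ℝ)
    (hc0 : 0 < c) (hc2 : c < Real.sqrt 2) (ψ : Ed d → ℂ)
    (hsol : SlabSolution d N c ψ) (hvort : ∀ x, ψ x ≠ 0)
    (ρ θ : Ed d → ℝ) (hρ : ∀ x, ρ x = ‖ψ x‖)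
    (hθ : ContDiffOn ℝ (⊤ : ℕ∞) θ (slabCl d N))
    (hlift : ∀ x ∈ slabCl d N, ψ x = (ρ x : ℂ) * Complex.exp (Complex.I * (θ x : ℂ))) :
    (-∫ x in slab d N, (pd ψ 0 x).im * ((ψ x).re - 1))
      = 1 / 2 * ∫ x in slab d N,
          (1 - ρ x ^ 2) * fderiv ℝ θ x (EuclideanSpace.single 0 1) ∧
    c * (-∫ x in slab d N, (pd ψ 0 x).im * ((ψ x).re - 1))
      = ∫ x in slab d N, ρ x ^ 2 * gradSqR θ x ∧
    (∫ x in slab d N, (2 * ρ x * gradSqR ρ x + ρ x * (1 - ρ x ^ 2) ^ 2))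
      = c * (∫ x in slab d N,
            ρ x * (1 - ρ x ^ 2) * fderiv ℝ θ x (EuclideanSpace.single 0 1))
        + ∫ x in slab d N, ρ x * (1 - ρ x ^ 2) * gradSqR θ x := by
  rcases Nat.eq_zero_or_pos N with rfl | hN
  -- For `N = 0` the slab is empty and all integrals vanish.
  · have he : slab d 0 = ∅ := by
      ext x
      simp only [slab, Set.mem_ofPred_eq, Set.mem_empty_iff_false, iff_false, not_and, not_lt,
        Nat.cast_zero, neg_zero]
      exact fun h => h.le
    simp [he]
  have hs := hsol.sol hN
  have hl := lift_of hsol.1 hvort hρ hθ hlift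
  obtain ⟨M, a, hg⟩ := hl.good hN hd hc0 hs fun x => by
    rw [← norm_sq_re_im]
    exact pow_pos (norm_pos_iff.2 (hvort x)) 2
  have Dv : ∀ x ∈ slab d N, (pd ψ 0 x).im = D N 0 (fun x => (ψ x).im) x := fun x hx =>
    (D_im ((hsol.1.contDiffAt (slab_nhds hx)).differentiableAt (by simp)) hx 0).symm
  have Dr : ∀ (f : Ed d → ℝ), ∀ x ∈ slab d N, ∀ i,
      fderiv ℝ f x (EuclideanSpace.single i 1) = D N i f x :=
    fun f x hx i => (D_eq_fderiv f hx i).symm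
  have Gr : ∀ (f : Ed d → ℝ), ∀ x ∈ slab d N, gradSqR f x = ∑ i, D N i f x ^ 2 :=
    fun f x hx => Finset.sum_congr rfl fun i _ => by rw [Dr f x hx]
  have e1 : ∫ x in slab d N, (pd ψ 0 x).im * ((ψ x).re - 1) =
      ∫ x in slab d N, D N 0 (fun x => (ψ x).im) x * ((ψ x).re - 1) :=
    setIntegral_congr_fun measurable_slab fun x hx => by simp only [Dv x hx]
  have e2 : ∫ x in slab d N, (1 - ρ x ^ 2) * fderiv ℝ θ x (EuclideanSpace.single 0 1) =
      ∫ x in slab d N, (1 - ρ x ^ 2) * D N 0 θ x :=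
    setIntegral_congr_fun measurable_slab fun x hx => by simp only [Dr θ x hx]
  have e3 : ∫ x in slab d N, ρ x ^ 2 * gradSqR θ x =
      ∫ x in slab d N, ρ x ^ 2 * ∑ i, D N i θ x ^ 2 :=
    setIntegral_congr_fun measurable_slab fun x hx => by simp only [Gr θ x hx]
  have e4 : ∫ x in slab d N, (2 * ρ x * gradSqR ρ x + ρ x * (1 - ρ x ^ 2) ^ 2) =
      ∫ x in slab d N, (2 * ρ x * ∑ i, D N i ρ x ^ 2 + ρ x * (1 - ρ x ^ 2) ^ 2) :=
    setIntegral_congr_fun measurable_slab fun x hx => by simp only [Gr ρ x hx]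
  have e5 : ∫ x in slab d N, ρ x * (1 - ρ x ^ 2) * fderiv ℝ θ x (EuclideanSpace.single 0 1) =
      ∫ x in slab d N, ρ x * (1 - ρ x ^ 2) * D N 0 θ x :=
    setIntegral_congr_fun measurable_slab fun x hx => by simp only [Dr θ x hx]
  have e6 : ∫ x in slab d N, ρ x * (1 - ρ x ^ 2) * gradSqR θ x =
      ∫ x in slab d N, ρ x * (1 - ρ x ^ 2) * ∑ i, D N i θ x ^ 2 :=
    setIntegral_congr_fun measurable_slab fun x hx => by simp only [Gr θ x hx]
  have h1 := hl.first hN hs hg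
  have h2 := hl.second hN hs hg
  rw [e1, e2, e3, e4, e5, e6]
  refine ⟨h1, ?_, hl.third hN hs hg⟩
  rw [h1, h2]
  ring
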